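/- Let 𝔽_{3,2} denote the 3-graph with vertex set {1,…,5} and edge set {123, 124, 125, 345}. There exist constants N_0 and c > 0 such that for all integers n ≥ N_0 and all integers t with 0 ≤ t ≤ c·n, one has EX(n,(t+1)𝔽_{3,2}) = { K_t^3 ⋈ S_3(n−t) }. -/

import Mathlib

open Filter

namespace DensityCH

/-- An `r`-uniform hypergraph with vertices in `ℕ`:
a finite vertex set together with a set of `r`-element edges. -/
structure HGraph (r : ℕ) where
  verts : Finset ℕ
  edges : Finset (Finset ℕ)
  edges_sub : ∀ e ∈ edges, e ⊆ verts
  edges_card : ∀ e ∈ edges, e.card = r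

namespace HGraph

/-- Build an `r`-graph from a vertex set and a set of candidate edges,
keeping exactly the well-formed candidates. -/
def ofEdges (r : ℕ) (V : Finset ℕ) (E : Finset (Finset ℕ)) : HGraph r where
  verts := V
  edges := E.filter fun e => e ⊆ V ∧ e.card = r
  edges_sub := fun e he => ((Finset.mem_filter.mp he).2).1
  edges_card := fun e he => ((Finset.mem_filter.mp he).2).2

variable {r : ℕ}

/-- `H` contains a copy of `F`, i.e. a subgraph isomorphic to `F`. -/
def IsCopyIn (F H : HGraph r) : Prop :=
  ∃ f : ℕ → ℕ, Set.InjOn f ↑F.verts ∧ (∀ v ∈ F.verts, f v ∈ H.verts) ∧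
    ∀ e ∈ F.edges, e.image f ∈ H.edges

/-- The subgraph of `H` induced on `S`. -/
def induce (H : HGraph r) (S : Finset ℕ) : HGraph r :=
  ofEdges r (H.verts ∩ S) (H.edges.filter fun e => e ⊆ S)

/-- Delete a vertex from `H`. -/
def deleteVert (H : HGraph r) (v : ℕ) : HGraph r :=
  ofEdges r (H.verts.erase v) (H.edges.filter fun e => v ∉ e)

/-- The degree of a vertex. -/
def deg (H : HGraph r) (v : ℕ) : ℕ := (H.edges.filter fun e => v ∈ e).card

/-- The maximum degree `Δ(H)`. -/
def maxDeg (H : HGraph r) : ℕ := H.verts.sup H.deg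

/-- The minimum degree `δ(H)`. -/
def minDeg (H : HGraph r) : ℕ :=
  if h : H.verts.Nonempty then H.verts.inf' h H.deg else 0

/-- The average degree `d(H) = r·|E(H)|/|V(H)|`. -/
noncomputable def avgDeg (H : HGraph r) : ℝ :=
  (r : ℝ) * (H.edges.card : ℝ) / (H.verts.card : ℝ)

/-- `H` contains `k` pairwise vertex-disjoint copies of `F`, i.e. `ν(F,H) ≥ k`. -/
def HasMatching (F H : HGraph r) (k : ℕ) : Prop :=
  ∃ S : Fin k → Finset ℕ,
    (∀ i, S i ⊆ H.verts ∧ (S i).card = F.verts.card) ∧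
    (∀ i j, i ≠ j → Disjoint (S i) (S j)) ∧
    ∀ i, F.IsCopyIn (H.induce (S i))

/-- Isomorphism of hypergraphs. -/
def Iso (G H : HGraph r) : Prop :=
  ∃ f : ℕ → ℕ, Set.BijOn f ↑G.verts ↑H.verts ∧
    ∀ e ∈ Finset.powersetCard r G.verts, (e ∈ G.edges ↔ e.image f ∈ H.edges)

/-- The join `G ⋈ H`: all edges of `G`, all edges of `H`, and all `r`-sets meeting
both vertex sets. -/
def join (G H : HGraph r) : HGraph r :=
  ofEdges r (G.verts ∪ H.verts)
    (G.edges ∪ H.edges ∪ ((Finset.powersetCard r (G.verts ∪ H.verts)).filter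
      fun e => (e ∩ G.verts).Nonempty ∧ (e ∩ H.verts).Nonempty))

end HGraph

/-- The complete `r`-graph on a vertex set `S`. -/
def completeOn (r : ℕ) (S : Finset ℕ) : HGraph r :=
  HGraph.ofEdges r S (Finset.powersetCard r S)

/-- The `r`-graph on `V` with no edges. -/
def emptyOn (r : ℕ) (V : Finset ℕ) : HGraph r := HGraph.ofEdges r V ∅

/-- The Turán number `ex(n,F)`. -/
noncomputable def exN (r n : ℕ) (F : HGraph r) : ℕ :=
  sSup {m | ∃ H : HGraph r, H.verts.card = n ∧ ¬ F.IsCopyIn H ∧ H.edges.card = m}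

/-- `d(n,F) = r·ex(n,F)/n`. -/
noncomputable def dN (r n : ℕ) (F : HGraph r) : ℝ := (r : ℝ) * (exN r n F : ℝ) / (n : ℝ)

/-- `δ(n,F) = ex(n,F) − ex(n−1,F)` (as a real number). -/
noncomputable def deltaN (r n : ℕ) (F : HGraph r) : ℝ := (exN r n F : ℝ) - (exN r (n-1) F : ℝ)

/-- `x` is the Turán density `π(F)`, i.e. the limit of `ex(n,F)/C(n,r)`. -/
def HasTuranDensity (r : ℕ) (F : HGraph r) (x : ℝ) : Prop :=
  Tendsto (fun n : ℕ => (exN r n F : ℝ) / (n.choose r : ℝ)) atTop (nhds x)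

/-- `ex(n,(t+1)F)`: the maximum number of edges of an `n`-vertex `r`-graph with no
`t+1` pairwise vertex-disjoint copies of `F`. -/
noncomputable def exMatchN (r n t : ℕ) (F : HGraph r) : ℕ :=
  sSup {m | ∃ H : HGraph r, H.verts.card = n ∧ ¬ F.HasMatching H (t+1) ∧ H.edges.card = m}

/-- `H ∈ EX(n,F)`. -/
def IsExtremalFree (r n : ℕ) (F H : HGraph r) : Prop :=
  H.verts.card = n ∧ ¬ F.IsCopyIn H ∧ H.edges.card = exN r n F

/-- `H ∈ EX(n,(t+1)F)`. -/
def IsExtremalMatchingFree (r n t : ℕ) (F H : HGraph r) : Prop :=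
  H.verts.card = n ∧ ¬ F.HasMatching H (t+1) ∧ H.edges.card = exMatchN r n t F

/-- `F` is `(f1, f2)`-bounded at `n`. -/
def BoundedAt (r n : ℕ) (F : HGraph r) (f1 f2 : ℝ) : Prop :=
  ∀ H : HGraph r, H.verts.card = n → ¬ F.IsCopyIn H →
    dN r n F - f1 ≤ H.avgDeg → (H.maxDeg : ℝ) ≤ dN r n F + f2

/-- `ex(·,F)` is `g`-smooth at `n`: `|δ(n,F) − d(n−1,F)| ≤ g(n)`. -/
def SmoothAt (r n : ℕ) (F : HGraph r) (g : ℝ) : Prop :=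
  |deltaN r n F - dN r (n-1) F| ≤ g

/-- The collection `H 0, …, H t` (on a common vertex set) has a rainbow `F`-matching. -/
def HasRainbowMatching (r t : ℕ) (F : HGraph r) (H : Fin (t+1) → HGraph r) : Prop :=
  ∃ S : Fin (t+1) → Finset ℕ,
    (∀ i, S i ⊆ (H i).verts ∧ (S i).card = F.verts.card) ∧
    (∀ i j, i ≠ j → Disjoint (S i) (S j)) ∧
    ∀ i, F.IsCopyIn ((H i).induce (S i))

/-!  Patterns -/

/-- An `r`-uniform pattern: a finite index set together with a collection of
`r`-multisets on it. -/
structure Pattern (r : ℕ) where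
  idx : Finset ℕ
  mE : Finset (Multiset ℕ)
  card_eq : ∀ s ∈ mE, Multiset.card s = r
  mem_idx : ∀ s ∈ mE, ∀ i ∈ s, i ∈ idx

namespace Pattern

variable {r : ℕ}

/-- The pattern `P − i`. -/
def erase (P : Pattern r) (i : ℕ) : Pattern r where
  idx := P.idx.erase i
  mE := P.mE.filter fun s => i ∉ s
  card_eq := fun s hs => P.card_eq s (Finset.mem_filter.mp hs).1
  mem_idx := by
    intro s hs j hj
    have h1 := Finset.mem_filter.mp hs
    refine Finset.mem_erase.mpr ⟨?_, P.mem_idx s h1.1 j hj⟩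
    rintro rfl
    exact h1.2 hj

/-- `H` is a `P`-construction: a blowup of the pattern `P`. -/
def IsConstruction (P : Pattern r) (H : HGraph r) : Prop :=
  ∃ part : ℕ → ℕ, (∀ v ∈ H.verts, part v ∈ P.idx) ∧
    ∀ e : Finset ℕ, e ∈ H.edges ↔ (e ⊆ H.verts ∧ e.card = r ∧ Multiset.map part e.val ∈ P.mE)

/-- `H` is a `P`-subconstruction: a subgraph of a `P`-construction. -/
def IsSubconstruction (P : Pattern r) (H : HGraph r) : Prop :=
  ∃ G : HGraph r, P.IsConstruction G ∧ H.verts ⊆ G.verts ∧ H.edges ⊆ G.edges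

end Pattern

/-- `Λ(P,n)`: the maximum number of edges of an `n`-vertex `P`-construction. -/
noncomputable def patEx (r : ℕ) (P : Pattern r) (n : ℕ) : ℕ :=
  sSup {m | ∃ H : HGraph r, P.IsConstruction H ∧ H.verts.card = n ∧ H.edges.card = m}

/-- The Lagrangian `λ(P) = lim Λ(P,n)/C(n,r)`. -/
noncomputable def patLagrangian (r : ℕ) (P : Pattern r) : ℝ :=
  limUnder atTop fun n : ℕ => (patEx r P n : ℝ) / (n.choose r : ℝ)

/-- The pattern `P` is minimal: `λ(P−i) < λ(P)` for all `i`. -/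
def Pattern.Minimal {r : ℕ} (P : Pattern r) : Prop :=
  ∀ i ∈ P.idx, patLagrangian r (P.erase i) < patLagrangian r P

/-- `(F,P)` is a Turán pair. -/
def IsTuranPair (r : ℕ) (F : HGraph r) (P : Pattern r) : Prop :=
  (∀ H : HGraph r, P.IsConstruction H → ¬ F.IsCopyIn H) ∧
  (∀ H : HGraph r, ¬ F.IsCopyIn H → H.edges.card = exN r H.verts.card F →
    P.IsConstruction H)

/-- `F` is edge-stable with respect to `P` (with Turán density `π`). -/
def EdgeStable (r : ℕ) (F : HGraph r) (P : Pattern r) (π : ℝ) : Prop :=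
  ∀ δ : ℝ, 0 < δ → ∃ N₀ : ℕ, ∃ ζ : ℝ, 0 < ζ ∧
    ∀ H : HGraph r, N₀ ≤ H.verts.card → ¬ F.IsCopyIn H →
      (π - ζ) * (H.verts.card.choose r : ℝ) ≤ (H.edges.card : ℝ) →
      ∃ H' : HGraph r, H'.verts ⊆ H.verts ∧ H'.edges ⊆ H.edges ∧
        (π - δ) * (H.verts.card.choose r : ℝ) ≤ (H'.edges.card : ℝ) ∧
        P.IsSubconstruction H'

/-- `F` is weakly vertex-extendable with respect to `P` (with Turán density `π`). -/
def WeaklyVertexExtendable (r : ℕ) (F : HGraph r) (P : Pattern r) (π : ℝ) : Prop :=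
  ∀ δ : ℝ, 0 < δ → ∃ N₀ : ℕ, ∃ ζ : ℝ, 0 < ζ ∧
    ∀ H : HGraph r, N₀ ≤ H.verts.card → ¬ F.IsCopyIn H →
      (π - ζ) * (((H.verts.card - 1).choose (r-1) : ℕ) : ℝ) ≤ (H.minDeg : ℝ) →
      ∀ v ∈ H.verts, P.IsSubconstruction (H.deleteVert v) →
        (H.deg v : ℝ) ≤ (π + δ) * (((H.verts.card - 1).choose (r-1) : ℕ) : ℝ)

/-- `F` is degree-stable with respect to `P` (with Turán density `π`). -/
def DegreeStable (r : ℕ) (F : HGraph r) (P : Pattern r) (π : ℝ) : Prop :=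
  ∃ ζ : ℝ, 0 < ζ ∧ ∃ N₀ : ℕ,
    ∀ H : HGraph r, N₀ ≤ H.verts.card → ¬ F.IsCopyIn H →
      (π - ζ) * (((H.verts.card - 1).choose (r-1) : ℕ) : ℝ) ≤ (H.minDeg : ℝ) →
      P.IsSubconstruction H

/-!  Concrete constructions -/

/-- The generalized Turán graph `T_r(·,ℓ)` on vertex set `V` (parts are residue
classes mod `ℓ`; on an interval these are balanced). -/
def turanOn (r ℓ : ℕ) (V : Finset ℕ) : HGraph r :=
  HGraph.ofEdges r V ((Finset.powersetCard r V).filter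
    fun e => ∀ u ∈ e, ∀ v ∈ e, u % ℓ = v % ℓ → u = v)

/-- The `r`-graph on `V₁ ∪ V₂` whose edges are all `r`-sets meeting both parts. -/
def crossOn (r : ℕ) (V₁ V₂ : Finset ℕ) : HGraph r :=
  HGraph.ofEdges r (V₁ ∪ V₂) ((Finset.powersetCard r (V₁ ∪ V₂)).filter
    fun e => (e ∩ V₁).Nonempty ∧ (e ∩ V₂).Nonempty)

/-- The `r`-graph on `V₁ ∪ V₂` whose edges are all `r`-sets meeting `V₁` in an odd
number of vertices. -/
def oddCross (r : ℕ) (V₁ V₂ : Finset ℕ) : HGraph r :=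
  HGraph.ofEdges r (V₁ ∪ V₂) ((Finset.powersetCard r (V₁ ∪ V₂)).filter
    fun e => Odd (e ∩ V₁).card)

/-- The Fano plane. -/
def fano : HGraph 3 :=
  HGraph.ofEdges 3 (Finset.Icc 1 7)
    {({1,2,3} : Finset ℕ), {3,4,5}, {5,6,1}, {1,7,4}, {2,7,5}, {3,7,6}, {2,4,6}}

/-- The generalized triangle `𝕋_r`, with edges `{1,…,r}`, `{1,…,r−1,r+1}` and
`{r,…,2r−1}`. -/
def genTri (r : ℕ) : HGraph r :=
  HGraph.ofEdges r (Finset.Icc 1 (2*r - 1))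
    {Finset.Icc 1 r, Finset.Icc 1 (r-1) ∪ {r+1}, Finset.Icc r (2*r - 1)}

/-- `G` is a blowup of the `r`-graph `W` (viewing `W` as a pattern). -/
def IsBlowupOf {r : ℕ} (W G : HGraph r) : Prop :=
  ∃ part : ℕ → ℕ, (∀ v ∈ G.verts, part v ∈ W.verts) ∧
    ∀ e : Finset ℕ, e ∈ G.edges ↔
      (e ⊆ G.verts ∧ e.card = r ∧ ∃ f ∈ W.edges, Multiset.map part e.val = f.val)

/-- The expansion `H^F` of an `r`-graph `F`: for every pair of vertices not covered
by an edge of `F`, add an edge consisting of this pair plus `r−2` new vertices,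
these sets of new vertices being pairwise disjoint. -/
def HGraph.expansion {r : ℕ} (F : HGraph r) : HGraph r :=
  HGraph.ofEdges r
    (F.verts ∪ (((F.verts ×ˢ F.verts).filter fun p =>
        p.1 < p.2 ∧ ∀ e ∈ F.edges, ¬ (p.1 ∈ e ∧ p.2 ∈ e)).biUnion fun p =>
      (Finset.range (r-2)).image fun s =>
        (F.verts.sup id + 1) + (p.1 * (F.verts.sup id + 1) + p.2) * r + s))
    (F.edges ∪ (((F.verts ×ˢ F.verts).filter fun p =>
        p.1 < p.2 ∧ ∀ e ∈ F.edges, ¬ (p.1 ∈ e ∧ p.2 ∈ e)).image fun p =>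
      insert p.1 (insert p.2 ((Finset.range (r-2)).image fun s =>
        (F.verts.sup id + 1) + (p.1 * (F.verts.sup id + 1) + p.2) * r + s))))

/-- A `2`-graph is a tree on `k` vertices: `k` vertices, `k−1` edges, connected. -/
def IsTreeGraph (k : ℕ) (T : HGraph 2) : Prop :=
  T.verts.card = k ∧ T.edges.card = k - 1 ∧
  ∀ S : Finset ℕ, S ⊆ T.verts → S.Nonempty → S ≠ T.verts →
    ∃ e ∈ T.edges, (e ∩ S).Nonempty ∧ (e \ S).Nonempty

/-- `T` satisfies the Erdős–Sós property for `k`: every graph with average degree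
greater than `k−2` contains `T`. -/
def ErdosSos (k : ℕ) (T : HGraph 2) : Prop :=
  ∀ G : HGraph 2, ((k : ℝ) - 2) * (G.verts.card : ℝ) < 2 * (G.edges.card : ℝ) →
    T.IsCopyIn G

/-- The `(r−2)`-expansion `Exp(T)` of a `2`-graph `T`: enlarge every edge by one
common fixed set of `r−2` new vertices. -/
def expTree (r : ℕ) (T : HGraph 2) : HGraph r :=
  HGraph.ofEdges r
    (T.verts ∪ ((Finset.range (r-2)).image fun s => T.verts.sup id + 1 + s))
    (T.edges.image fun e =>
      e ∪ ((Finset.range (r-2)).image fun s => T.verts.sup id + 1 + s))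

/-- The chromatic number of a `2`-graph. -/
noncomputable def chrom (F : HGraph 2) : ℕ :=
  sInf {k | ∃ c : ℕ → ℕ, (∀ v ∈ F.verts, c v < k) ∧
    ∀ e ∈ F.edges, ∀ u ∈ e, ∀ v ∈ e, u ≠ v → c u ≠ c v}

/-- A graph is edge-critical if deleting some edge lowers its chromatic number. -/
def EdgeCritical (F : HGraph 2) : Prop :=
  ∃ e ∈ F.edges, chrom (HGraph.ofEdges 2 F.verts (F.edges.erase e)) < chrom F

/-- `H` is semibipartite: the vertex set splits into `V₁ ∪ V₂` so that every edge
has exactly one vertex in `V₁`. -/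
def Semibipartite (r : ℕ) (H : HGraph r) : Prop :=
  ∃ V₁ ⊆ H.verts, ∀ e ∈ H.edges, (e ∩ V₁).card = 1

/-- `H` is a `K_ℓ^r`-subconstruction, i.e. an `ℓ`-partite `r`-graph. -/
def IsKlSub (r ℓ : ℕ) (H : HGraph r) : Prop :=
  ∃ f : ℕ → ℕ, (∀ v ∈ H.verts, f v < ℓ) ∧
    ∀ e ∈ H.edges, ∀ u ∈ e, ∀ v ∈ e, f u = f v → u = v

/-- The Lagrangian `λ(W)` of an `r`-graph `W`, viewing `W` as a pattern. -/
noncomputable def hgLagrangian (r : ℕ) (W : HGraph r) : ℝ :=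
  limUnder atTop fun n : ℕ =>
    ((sSup {m | ∃ G : HGraph r, IsBlowupOf W G ∧ G.verts.card = n ∧ G.edges.card = m} : ℕ) : ℝ)
      / (n.choose r : ℝ)

/-- The `r`-graph `B(r,ℓ+1)`. -/
def BGraph (r ℓ : ℕ) : HGraph r :=
  HGraph.ofEdges r (Finset.Icc 1 (ℓ+1))
    (insert (Finset.Icc 1 r)
      ((Finset.powersetCard r (Finset.Icc 2 (ℓ+1))).filter
        fun e => (e ∩ Finset.Icc 2 r).card ≤ 1))

/-- The `r`-uniform matching of size two, `M_2^r`. -/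
def matching2 (r : ℕ) : HGraph r :=
  HGraph.ofEdges r (Finset.Icc 1 (2*r)) {Finset.Icc 1 r, Finset.Icc (r+1) (2*r)}

/-- The expanded triangle `𝓒_3^{2r}`. -/
def expandedTriangle (r : ℕ) : HGraph (2*r) :=
  HGraph.ofEdges (2*r) (Finset.Icc 1 (3*r))
    {Finset.Icc 1 (2*r), Finset.Icc (r+1) (3*r), Finset.Icc 1 r ∪ Finset.Icc (2*r+1) (3*r)}

/-- The `4`-graph `𝔽_{4,3}`. -/
def F43 : HGraph 4 :=
  HGraph.ofEdges 4 (Finset.Icc 1 7)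
    {({1,2,3,4} : Finset ℕ), {1,2,3,5}, {1,2,3,6}, {1,2,3,7}, {4,5,6,7}}

/-- The `3`-graph `𝔽_{3,2}`. -/
def F32 : HGraph 3 :=
  HGraph.ofEdges 3 (Finset.Icc 1 5)
    {({1,2,3} : Finset ℕ), {1,2,4}, {1,2,5}, {3,4,5}}

/-- `H` contains pairwise vertex-disjoint copies of `F i`, `ts i` many of each. -/
def HasMixedMatching (r k : ℕ) (F : Fin k → HGraph r) (ts : Fin k → ℕ)
    (H : HGraph r) : Prop :=
  ∃ S : (i : Fin k) → Fin (ts i) → Finset ℕ,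
    (∀ i j, S i j ⊆ H.verts ∧ (S i j).card = (F i).verts.card) ∧
    (∀ p q : Σ i : Fin k, Fin (ts i), p ≠ q → Disjoint (S p.1 p.2) (S q.1 q.2)) ∧
    ∀ i j, (F i).IsCopyIn (H.induce (S i j))

/-- `ex(n, ⊔ᵢ tᵢ Fᵢ)`. -/
noncomputable def exMixedN (r k : ℕ) (F : Fin k → HGraph r) (ts : Fin k → ℕ)
    (n : ℕ) : ℕ :=
  sSup {m | ∃ H : HGraph r, H.verts.card = n ∧ ¬ HasMixedMatching r k F ts H ∧
    H.edges.card = m}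

/-- `ex(n, {F₁,…,F_k})`. -/
noncomputable def exFamN (r k : ℕ) (F : Fin k → HGraph r) (n : ℕ) : ℕ :=
  sSup {m | ∃ H : HGraph r, H.verts.card = n ∧ (∀ i, ¬ (F i).IsCopyIn H) ∧
    H.edges.card = m}



section PartN
lemma numE_range {a τ : ℝ} (h0 : 0 < a) (hτ : 4/9 ≤ τ)
    (h1 : τ ≤ 3*(1-a)*a^2 + τ*(1-a)^3) : 53/100 ≤ a ∧ a ≤ 73/100 ∧ τ ≤ 4642/10000 := by
  have h2 : τ * (3 - 3*a + a^2) ≤ 3*a*(1-a) := by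
    have : a * (τ * (3 - 3*a + a^2)) ≤ a * (3*a*(1-a)) := by nlinarith
    exact le_of_mul_le_mul_left this h0
  have hp : 0 < 3 - 3*a + a^2 := by nlinarith [sq_nonneg (a - 3/2)]
  have h3 : 31*a^2 - 39*a + 12 ≤ 0 := by nlinarith
  refine ⟨by nlinarith, by nlinarith, ?_⟩
  by_contra h
  push Not at h
  nlinarith [sq_nonneg (a - 634/1000)]

lemma num2 {a τ : ℝ} (ha : 53/100 ≤ a) (ha' : a ≤ 57/100) (hτ : 4/9 ≤ τ) (hτ' : τ ≤ 4642/10000) :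
    1/10000 < 2*a^2*τ - 6*(1-a)*a^4 - a^2*τ*(1-a)^3 - 3/4*(1-a)*(τ-a^2)^2 := by
  have key : 1/10000 < 2*a^2*(4/9) - 6*(1-a)*a^4 - a^2*(4/9)*(1-a)^3 - 3/4*(1-a)*(4/9-a^2)^2 := by
    obtain ⟨x, rfl⟩ : ∃ x, a = 57/100 - x := ⟨57/100 - a, by ring⟩
    have hx0 : 0 ≤ x := by linarith
    have hx1 : x ≤ 4/100 := by linarith
    have h2 : 0 ≤ x^2 := by positivity
    have h2' : x^2 ≤ x * (4/100) := by nlinarith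
    have h3 : 0 ≤ x^3 := by positivity
    have h3' : x^3 ≤ x * (4/100)^2 := by nlinarith
    have h4 : 0 ≤ x^4 := by positivity
    have h4' : x^4 ≤ x * (4/100)^3 := by nlinarith
    have h5 : 0 ≤ x^5 := by positivity
    have h5' : x^5 ≤ x * (4/100)^4 := by nlinarith
    ring_nf
    linarith
  have h2 : 0 ≤ (τ - 4/9) * (2*a^2 - a^2*(1-a)^3 - 3/4*(1-a)*(τ+4/9-2*a^2)) := by
    apply mul_nonneg (by linarith)
    have e1 : (28:ℝ)/100 ≤ a^2 := by nlinarith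
    have e2 : (1-a)^3 ≤ 1 := pow_le_one₀ (by linarith) (by linarith)
    have e3 : (1-a) * (τ+4/9-2*a^2) ≤ 47/100 * (35/100) := by
      apply mul_le_mul <;> nlinarith
    nlinarith
  nlinarith

lemma num3id (a : ℝ) : 108*(a^2*(4/9) - 3*(1-a)*a^4 - 3/4*(1-a)*(4/9-a^2)^2)
    = (3*a-2)^2*(45*a^3+15*a^2-8*a-4) := by ring

lemma num3q {a : ℝ} (ha : 56/100 ≤ a) : 4 ≤ 45*a^3+15*a^2-8*a-4 := by
  nlinarith [mul_nonneg (sub_nonneg.2 ha) (sq_nonneg a)]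

end PartN

section PartT1
set_option linter.unusedSectionVars false
set_option linter.unusedVariables false

/-- Symmetric ternary relation: a 3-graph on a type. -/
structure TG (V : Type) where
  E : V → V → V → Prop
  s12 : ∀ {x y z}, E x y z → E y x z
  s23 : ∀ {x y z}, E x y z → E x z y
  ne : ∀ {x y z}, E x y z → x ≠ y

namespace TG
variable {V : Type} (T : TG V)

def Free : Prop := ∀ x y a b c, T.E x y a → T.E x y b → T.E x y c → ¬ T.E a b c

def Indep (S : Finset V) : Prop := ∀ a ∈ S, ∀ b ∈ S, ∀ c ∈ S, ¬ T.E a b c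

open Classical in
noncomputable def w (x y z : V) : ℝ := if T.E x y z then 1 else 0

noncomputable def L (p : V → ℝ) (v : V) (P Q : Finset V) : ℝ :=
  ∑ x ∈ P, ∑ y ∈ Q, p x * p y * T.w v x y

noncomputable def W (p : V → ℝ) (P Q R : Finset V) : ℝ := ∑ x ∈ P, p x * T.L p x Q R

noncomputable def d (p : V → ℝ) (x y : V) (P : Finset V) : ℝ := ∑ z ∈ P, p z * T.w x y z

variable {T} {p : V → ℝ}

lemma w_nonneg (x y z : V) : 0 ≤ T.w x y z := by unfold w; split_ifs <;> norm_num
lemma w_le (x y z : V) : T.w x y z ≤ 1 := by unfold w; split_ifs <;> norm_num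
lemma w_s12 (x y z : V) : T.w x y z = T.w y x z := by
  unfold w
  have : T.E x y z ↔ T.E y x z := ⟨T.s12, T.s12⟩
  classical exact if_congr this rfl rfl
lemma w_s23 (x y z : V) : T.w x y z = T.w x z y := by
  unfold w
  have : T.E x y z ↔ T.E x z y := ⟨T.s23, T.s23⟩
  classical exact if_congr this rfl rfl
lemma w_eq_one {x y z : V} (h : T.E x y z) : T.w x y z = 1 := by simp [w, h]
lemma w_eq_zero {x y z : V} (h : ¬ T.E x y z) : T.w x y z = 0 := by simp [w, h]

lemma L_nonneg (hp : ∀ v, 0 ≤ p v) (v : V) (P Q : Finset V) : 0 ≤ T.L p v P Q :=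
  Finset.sum_nonneg fun x _ => Finset.sum_nonneg fun y _ =>
    mul_nonneg (mul_nonneg (hp x) (hp y)) (w_nonneg _ _ _)

lemma L_le (hp : ∀ v, 0 ≤ p v) (v : V) (P Q : Finset V) :
    T.L p v P Q ≤ (∑ x ∈ P, p x) * (∑ x ∈ Q, p x) := by
  rw [Finset.sum_mul_sum]
  refine Finset.sum_le_sum fun x _ => Finset.sum_le_sum fun y _ => ?_
  have := mul_nonneg (hp x) (hp y)
  nlinarith [T.w_le v x y]

lemma L_comm (v : V) (P Q : Finset V) : T.L p v P Q = T.L p v Q P := by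
  unfold L
  rw [Finset.sum_comm]
  refine Finset.sum_congr rfl fun x _ => Finset.sum_congr rfl fun y _ => ?_
  rw [w_s23, mul_comm (p y)]

lemma L_eq_d (v : V) (P Q : Finset V) : T.L p v P Q = ∑ x ∈ P, p x * T.d p v x Q := by
  unfold L d
  refine Finset.sum_congr rfl fun x _ => ?_
  rw [Finset.mul_sum]
  exact Finset.sum_congr rfl fun y _ => by ring

lemma W_comm23 (P Q R : Finset V) : T.W p P Q R = T.W p P R Q := by
  unfold W; exact Finset.sum_congr rfl fun x _ => by rw [L_comm]

lemma W_eq (P Q R : Finset V) : T.W p P Q R =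
    ∑ x ∈ P, ∑ y ∈ Q, ∑ z ∈ R, p x * p y * p z * T.w x y z := by
  unfold W L
  refine Finset.sum_congr rfl fun x _ => ?_
  rw [Finset.mul_sum]
  refine Finset.sum_congr rfl fun y _ => ?_
  rw [Finset.mul_sum]
  exact Finset.sum_congr rfl fun z _ => by ring

lemma W_comm12 (P Q R : Finset V) : T.W p P Q R = T.W p Q P R := by
  rw [W_eq, W_eq, Finset.sum_comm]
  refine Finset.sum_congr rfl fun x _ => Finset.sum_congr rfl fun y _ =>
    Finset.sum_congr rfl fun z _ => ?_
  rw [w_s12]; ring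

lemma W_nonneg (hp : ∀ v, 0 ≤ p v) (P Q R : Finset V) : 0 ≤ T.W p P Q R :=
  Finset.sum_nonneg fun x _ => mul_nonneg (hp x) (L_nonneg hp _ _ _)

lemma d_nonneg (hp : ∀ v, 0 ≤ p v) (x y : V) (P : Finset V) : 0 ≤ T.d p x y P :=
  Finset.sum_nonneg fun z _ => mul_nonneg (hp z) (w_nonneg _ _ _)

lemma d_le (hp : ∀ v, 0 ≤ p v) (x y : V) (P : Finset V) : T.d p x y P ≤ ∑ z ∈ P, p z :=
  Finset.sum_le_sum fun z _ => mul_le_of_le_one_right (hp z) (w_le _ _ _)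

lemma d_comm (x y : V) (P : Finset V) : T.d p x y P = T.d p y x P :=
  Finset.sum_congr rfl fun z _ => by rw [w_s12]

lemma L_mono (hp : ∀ v, 0 ≤ p v) (v : V) {P Q P' Q' : Finset V} (h : P ⊆ P') (h' : Q ⊆ Q') :
    T.L p v P Q ≤ T.L p v P' Q' := by
  unfold L
  refine (Finset.sum_le_sum fun x _ => Finset.sum_le_sum_of_subset_of_nonneg h' fun y _ _ => ?_).trans
    (Finset.sum_le_sum_of_subset_of_nonneg h fun x _ _ => Finset.sum_nonneg fun y _ => ?_) <;>
  exact mul_nonneg (mul_nonneg (hp x) (hp y)) (w_nonneg _ _ _)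

section fin
variable [Fintype V] [DecidableEq V]

lemma sum_split (S : Finset V) (f : V → ℝ) : ∑ x, f x = ∑ x ∈ S, f x + ∑ x ∈ Sᶜ, f x :=
  (Finset.sum_add_sum_compl S f).symm

lemma L_split_left (S : Finset V) (v : V) (Q : Finset V) :
    T.L p v Finset.univ Q = T.L p v S Q + T.L p v Sᶜ Q := by
  unfold L; exact sum_split S _

lemma L_split (S : Finset V) (v : V) :
    T.L p v Finset.univ Finset.univ = T.L p v S S + 2 * T.L p v S Sᶜ + T.L p v Sᶜ Sᶜ := by
  rw [L_split_left S, L_comm v S, L_comm v Sᶜ, L_split_left S, L_split_left S, L_comm v Sᶜ S]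
  ring

lemma d_split (S : Finset V) (x y : V) :
    T.d p x y Finset.univ = T.d p x y S + T.d p x y Sᶜ := sum_split S _

lemma W_split (S : Finset V) :
    T.W p Finset.univ Finset.univ Finset.univ
      = T.W p S S S + 3 * T.W p Sᶜ S S + 3 * T.W p Sᶜ S Sᶜ + T.W p Sᶜ Sᶜ Sᶜ := by
  have h : ∀ P : Finset V, ∑ x ∈ P, p x * T.L p x Finset.univ Finset.univ
      = T.W p P S S + 2 * T.W p P S Sᶜ + T.W p P Sᶜ Sᶜ := by
    intro P
    unfold W
    rw [Finset.mul_sum, ← Finset.sum_add_distrib, ← Finset.sum_add_distrib]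
    exact Finset.sum_congr rfl fun x _ => by rw [L_split S]; ring
  have e1 : T.W p S S Sᶜ = T.W p Sᶜ S S := by rw [W_comm23, W_comm12]
  have e2 : T.W p S Sᶜ Sᶜ = T.W p Sᶜ S Sᶜ := W_comm12 _ _ _
  have : T.W p Finset.univ Finset.univ Finset.univ
      = ∑ x ∈ S, p x * T.L p x Finset.univ Finset.univ
        + ∑ x ∈ Sᶜ, p x * T.L p x Finset.univ Finset.univ := sum_split S _
  rw [this, h, h, e1, e2]; ring

lemma W_indep {S : Finset V} (h : T.Indep S) : T.W p S S S = 0 := by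
  rw [W_eq]
  refine Finset.sum_eq_zero fun x hx => Finset.sum_eq_zero fun y hy =>
    Finset.sum_eq_zero fun z hz => ?_
  rw [w_eq_zero (h x hx y hy z hz), mul_zero]

open Classical in
lemma nbr_indep (hF : T.Free) (x y : V) : T.Indep (Finset.univ.filter fun z => T.E x y z) := by
  intro a ha b hb c hc
  simp only [Finset.mem_filter, Finset.mem_univ, true_and] at ha hb hc
  exact hF x y a b c ha hb hc

open Classical in
lemma d_univ_eq (x y : V) :
    T.d p x y Finset.univ = ∑ z ∈ Finset.univ.filter (fun z => T.E x y z), p z := by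
  unfold d w
  rw [Finset.sum_filter]
  exact Finset.sum_congr rfl fun z _ => by split_ifs <;> simp

/-- the triple inequality: edges inside `Sᶜ`. -/
lemma three_sum (hF : T.Free) (hp : ∀ v, 0 ≤ p v) {P Q : Finset V} {a b c : V} (h : T.E a b c) :
    T.L p a P Q + T.L p b P Q + T.L p c P Q ≤ 2 * ((∑ x ∈ P, p x) * (∑ x ∈ Q, p x)) := by
  unfold L
  rw [Finset.sum_mul_sum, Finset.mul_sum, ← Finset.sum_add_distrib, ← Finset.sum_add_distrib]
  refine Finset.sum_le_sum fun x _ => ?_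
  rw [Finset.mul_sum, ← Finset.sum_add_distrib, ← Finset.sum_add_distrib]
  refine Finset.sum_le_sum fun y _ => ?_
  have h0 := mul_nonneg (hp x) (hp y)
  have : T.w a x y + T.w b x y + T.w c x y ≤ 2 := by
    by_cases h1 : T.E a x y
    · by_cases h2 : T.E b x y
      · by_cases h3 : T.E c x y
        · exact absurd h (hF x y a b c (T.s23 (T.s12 h1)) (T.s23 (T.s12 h2)) (T.s23 (T.s12 h3)))
        · rw [w_eq_zero h3]; linarith [T.w_le a x y, T.w_le b x y]
      · rw [w_eq_zero h2]; linarith [T.w_le a x y, T.w_le c x y]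
    · rw [w_eq_zero h1]; linarith [T.w_le b x y, T.w_le c x y]
  nlinarith

lemma sumAB (hF : T.Free) (hp : ∀ v, 0 ≤ p v) (S R : Finset V) :
    3 * ∑ r ∈ R, p r * (T.L p r S S * T.L p r R R) ≤ 2 * (∑ x ∈ S, p x)^2 * T.W p R R R := by
  set A : V → ℝ := fun r => T.L p r S S with hA
  have e1 : ∑ r ∈ R, p r * (A r * T.L p r R R)
      = ∑ x ∈ R, ∑ y ∈ R, ∑ z ∈ R, p x * p y * p z * T.w x y z * A x := by
    unfold L
    refine Finset.sum_congr rfl fun x _ => ?_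
    rw [Finset.mul_sum, Finset.mul_sum]
    refine Finset.sum_congr rfl fun y _ => ?_
    rw [Finset.mul_sum, Finset.mul_sum]
    exact Finset.sum_congr rfl fun z _ => by ring
  have e2 : ∑ x ∈ R, ∑ y ∈ R, ∑ z ∈ R, p x * p y * p z * T.w x y z * A x
      = ∑ x ∈ R, ∑ y ∈ R, ∑ z ∈ R, p x * p y * p z * T.w x y z * A y := by
    rw [Finset.sum_comm]
    refine Finset.sum_congr rfl fun x _ => Finset.sum_congr rfl fun y _ =>
      Finset.sum_congr rfl fun z _ => ?_
    rw [w_s12]; ring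
  have e3 : ∑ x ∈ R, ∑ y ∈ R, ∑ z ∈ R, p x * p y * p z * T.w x y z * A y
      = ∑ x ∈ R, ∑ y ∈ R, ∑ z ∈ R, p x * p y * p z * T.w x y z * A z := by
    refine Finset.sum_congr rfl fun x _ => ?_
    rw [Finset.sum_comm]
    refine Finset.sum_congr rfl fun y _ =>
      Finset.sum_congr rfl fun z _ => ?_
    rw [w_s23]; ring
  have e4 : 3 * ∑ r ∈ R, p r * (A r * T.L p r R R)
      = ∑ x ∈ R, ∑ y ∈ R, ∑ z ∈ R, p x * p y * p z * T.w x y z * (A x + A y + A z) := by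
    simp only [mul_add, Finset.sum_add_distrib]
    rw [← e3, ← e2, ← e1]; ring
  show 3 * ∑ r ∈ R, p r * (A r * T.L p r R R) ≤ _
  rw [e4, W_eq, Finset.mul_sum]
  refine Finset.sum_le_sum fun x _ => ?_
  rw [Finset.mul_sum]
  refine Finset.sum_le_sum fun y _ => ?_
  rw [Finset.mul_sum]
  refine Finset.sum_le_sum fun z _ => ?_
  by_cases h : T.E x y z
  · have := three_sum hF hp h (P := S) (Q := S)
    have h0 := mul_nonneg (mul_nonneg (hp x) (hp y)) (hp z)
    rw [w_eq_one h]
    have h5 : A x + A y + A z ≤ 2 * (∑ x ∈ S, p x)^2 := by rw [sq]; exact this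
    nlinarith
  · rw [w_eq_zero h]; simp

end fin
end TG

/-- Real-number consequences. -/
lemma realL1 {ι : Type} {R : Finset ι} {p A G B : ι → ℝ} {α ρ Δ t X Xb : ℝ}
    (hp : ∀ r, 0 ≤ p r) (hρ : ∑ r ∈ R, p r = ρ)
    (hA : ∀ r ∈ R, 0 ≤ A r) (hA' : ∀ r ∈ R, A r ≤ α^2)
    (hG : ∀ r ∈ R, 0 ≤ G r)
    (hB : ∀ r ∈ R, 0 ≤ B r) (hB' : ∀ r ∈ R, B r ≤ ρ^2) (hAG : ∀ r ∈ R, A r + G r ≤ α^2)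
    (hD : ∀ r ∈ R, A r + 2 * G r + B r ≤ Δ)
    (hX : X = ∑ r ∈ R, p r * B r) (hXb : X ≤ Xb)
    (ht : t = 3 * ∑ r ∈ R, p r * A r + 3 * ∑ r ∈ R, p r * G r + X)
    (hAB : 3 * ∑ r ∈ R, p r * (A r * B r) ≤ 2 * α^2 * X) :
    t ≤ 3 * ρ * α^2 + Xb ∧
    2 * α^2 * t ≤ 6*ρ*α^4 + α^2 * Xb + 3/4*ρ*(Δ-α^2)^2 ∧
    (Δ ≤ 3/2*α^2 → ρ^2+Δ ≤ 2*α^2 → α^2*t ≤ 3*ρ*α^4 + 3/4*ρ*(Δ-α^2)^2) ∧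
    α^2*t ≤ 3*ρ*α^4 - (3/2*α^2 - 3*ρ^2) * ∑ r ∈ R, p r * (α^2 - A r) + 3/2*α^2*ρ*(Δ-α^2) := by
  set SA := ∑ r ∈ R, p r * A r
  set SG := ∑ r ∈ R, p r * G r
  set SAB := ∑ r ∈ R, p r * (A r * B r)
  have hXn : 0 ≤ X := by
    rw [hX]; exact Finset.sum_nonneg fun r hr => mul_nonneg (hp r) (hB r hr)
  have key : ∀ (c1 c2 c3 c4 c5 : ℝ), (∀ r ∈ R, c1 * A r + c2 * G r + c3 * B r + c4 * (A r * B r) ≤ c5)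
      → c1 * SA + c2 * SG + c3 * X + c4 * SAB ≤ c5 * ρ := by
    intro c1 c2 c3 c4 c5 h
    rw [hX, ← hρ, Finset.mul_sum, Finset.mul_sum, Finset.mul_sum, Finset.mul_sum, Finset.mul_sum,
      ← Finset.sum_add_distrib, ← Finset.sum_add_distrib, ← Finset.sum_add_distrib]
    refine Finset.sum_le_sum fun r hr => ?_
    have := mul_le_mul_of_nonneg_left (h r hr) (hp r)
    linarith
  have k1 := key 1 1 0 0 (α^2) (fun r hr => by linarith [hAG r hr])
  have hα : 0 ≤ α^2 := sq_nonneg α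
  have hρ0 : 0 ≤ ρ := by rw [← hρ]; exact Finset.sum_nonneg fun r _ => hp r
  have hSF : ∑ r ∈ R, p r * (α^2 - A r) = α^2 * ρ - SA := by
    rw [← hρ, Finset.mul_sum, ← Finset.sum_sub_distrib]
    exact Finset.sum_congr rfl fun r _ => by ring
  refine ⟨by linarith, ?_, ?_, ?_⟩
  · -- pointwise F B - 2 α² h ≤ s²/4
    have k := key (2*α^2) (2*α^2) (α^2) (-1) ((Δ-α^2)^2/4 + 2*α^4) (fun r hr => by
      have a := hA r hr; have a' := hA' r hr; have b := hB r hr; have d := hD r hr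
      have e : (α^2 - A r) * B r ≤ (α^2 - A r) * (2*(α^2 - A r - G r) + Δ - α^2 - (α^2 - A r)) :=
        mul_le_mul_of_nonneg_left (by linarith) (by linarith)
      have f : (α^2 - A r) * (α^2 - A r - G r) ≤ α^2 * (α^2 - A r - G r) :=
        mul_le_mul_of_nonneg_right (by linarith) (by linarith [hAG r hr])
      nlinarith [sq_nonneg ((Δ-α^2)/2 - (α^2 - A r))])
    have : α^2 * X ≤ α^2 * Xb := mul_le_mul_of_nonneg_left hXb hα
    subst ht
    nlinarith
  · intro h1 h2
    have k := key (α^2) (α^2) (α^2) (-1) ((Δ-α^2)^2/4 + α^4) (fun r hr => by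
      have a := hA r hr; have a' := hA' r hr; have b := hB r hr; have b' := hB' r hr
      have d := hD r hr; have g := hAG r hr
      set F := α^2 - A r with hF
      have eA : A r = α^2 - F := by rw [hF]; ring
      set h := F - G r with hh
      have eG : G r = F - h := by rw [hh]; ring
      have h2h : α^2 + F + B r - Δ ≤ 2 * h := by rw [eA, eG] at d; linarith
      suffices F * B r - α^2 * h ≤ (Δ-α^2)^2/4 by rw [eG]; rw [eA]; nlinarith
      have hF0 : 0 ≤ F := by linarith
      have hh0 : 0 ≤ h := by linarith
      rcases le_total (2*F) (α^2) with c | c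
      · have e1 : 2 * F * h ≤ α^2 * h := mul_le_mul_of_nonneg_right c hh0
        have e2 : F * (B r - 2 * h) ≤ F * (Δ - α^2 - F) := mul_le_mul_of_nonneg_left (by linarith) hF0
        nlinarith [sq_nonneg ((Δ-α^2)/2 - F)]
      · have e1 : α^2 * (α^2 + F + B r - Δ) ≤ α^2 * (2*h) := mul_le_mul_of_nonneg_left h2h hα
        have e2 : (2*F - α^2) * B r ≤ (2*F - α^2) * ρ^2 := mul_le_mul_of_nonneg_left b' (by linarith)
        have e3 : (2*F - α^2) * ρ^2 ≤ (2*F-α^2) * (2*α^2 - Δ) :=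
          mul_le_mul_of_nonneg_left (by linarith) (by linarith)
        have e4 : 0 ≤ (α^2 - F) * (3/2*α^2 - Δ) := mul_nonneg (by linarith) (by linarith)
        nlinarith [sq_nonneg (Δ-α^2)])
    subst ht
    nlinarith
  · rw [hSF]
    have k := key (3*α^2 - (3/2*α^2 - 3*ρ^2)) (3*α^2) (3*α^2) (-3)
        (3*α^4 - (3/2*α^2 - 3*ρ^2)*α^2 + 3/2*α^2*(Δ-α^2)) (fun r hr => by
      have a := hA r hr; have a' := hA' r hr; have b := hB r hr; have b' := hB' r hr
      have d := hD r hr; have g := hAG r hr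
      have e1 : (α^2 - A r) * B r ≤ (α^2 - A r) * ρ^2 := mul_le_mul_of_nonneg_left b' (by linarith)
      have e2 : α^2 * (A r + 2 * G r + B r) ≤ α^2 * Δ := mul_le_mul_of_nonneg_left d hα
      have e3 : 0 ≤ α^2 * B r := mul_nonneg hα b
      nlinarith)
    subst ht
    nlinarith

end PartT1

section PartT2
set_option linter.unusedSectionVars false
set_option linter.unusedVariables false
namespace TG
variable {V : Type} {T : TG V} {p : V → ℝ} [Fintype V] [DecidableEq V]

/-- `S` is an independent set of maximum weight. -/
def MaxIndep (T : TG V) (p : V → ℝ) (S : Finset V) : Prop :=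
  T.Indep S ∧ ∀ S', T.Indep S' → ∑ x ∈ S', p x ≤ ∑ x ∈ S, p x

open Classical in
lemma exists_maxIndep (T : TG V) (p : V → ℝ) : ∃ S, T.MaxIndep p S := by
  have hne : ((Finset.univ : Finset (Finset V)).filter fun S => T.Indep S).Nonempty :=
    ⟨∅, Finset.mem_filter.2 ⟨Finset.mem_univ _, by simp [Indep]⟩⟩
  obtain ⟨S, hS, hmax⟩ := Finset.exists_max_image _ (fun S => ∑ x ∈ S, p x) hne
  simp only [Finset.mem_filter, Finset.mem_univ, true_and] at hS hmax
  exact ⟨S, hS, hmax⟩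

lemma lemma1 (hF : T.Free) (hp : ∀ v, 0 ≤ p v) (h1 : ∑ v, p v = 1) {S : Finset V}
    (hS : T.MaxIndep p S) {Δ Xb α : ℝ} (hα : ∑ x ∈ S, p x = α)
    (hD : ∀ v, T.L p v Finset.univ Finset.univ ≤ Δ) (hX : T.W p Sᶜ Sᶜ Sᶜ ≤ Xb) {t : ℝ}
    (ht : t = T.W p Finset.univ Finset.univ Finset.univ) :
    t ≤ 3 * (1-α) * α^2 + Xb ∧
    2 * α^2 * t ≤ 6*(1-α)*α^4 + α^2 * Xb + 3/4*(1-α)*(Δ-α^2)^2 ∧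
    (Δ ≤ 3/2*α^2 → (1-α)^2+Δ ≤ 2*α^2 → α^2*t ≤ 3*(1-α)*α^4 + 3/4*(1-α)*(Δ-α^2)^2) ∧
    α^2*t ≤ 3*(1-α)*α^4 - (3/2*α^2 - 3*(1-α)^2) * ∑ r ∈ Sᶜ, p r * (α^2 - T.L p r S S)
      + 3/2*α^2*(1-α)*(Δ-α^2) := by
  have hρ : ∑ r ∈ Sᶜ, p r = 1 - α := by
    have := sum_split S p; linarith
  refine realL1 (R := Sᶜ) (p := p) (A := fun r => T.L p r S S) (G := fun r => T.L p r S Sᶜ)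
    (B := fun r => T.L p r Sᶜ Sᶜ) (X := T.W p Sᶜ Sᶜ Sᶜ) hp hρ ?_ ?_ ?_ ?_ ?_ ?_ ?_ ?_ hX ?_ ?_
  · exact fun r _ => L_nonneg hp _ _ _
  · intro r _
    have := L_le (T := T) hp r S S
    rw [hα] at this; nlinarith
  · exact fun r _ => L_nonneg hp _ _ _
  · exact fun r _ => L_nonneg hp _ _ _
  · intro r _
    have := L_le (T := T) hp r Sᶜ Sᶜ
    rw [hρ] at this; nlinarith
  · intro r _
    show T.L p r S S + T.L p r S Sᶜ ≤ α^2
    rw [L_eq_d, L_eq_d, ← Finset.sum_add_distrib, sq]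
    have e : α * α = ∑ x ∈ S, p x * α := by rw [← Finset.sum_mul, hα]
    rw [e]
    refine Finset.sum_le_sum fun x _ => ?_
    rw [← mul_add, ← d_split]
    refine mul_le_mul_of_nonneg_left ?_ (hp x)
    rw [d_univ_eq, ← hα]
    exact hS.2 _ (nbr_indep hF r x)
  · intro r _
    have := hD r
    rw [L_split S] at this; exact this
  · rfl
  · rw [ht, W_split S, W_indep hS.1]; simp only [W]; ring
  · have := sumAB hF hp S Sᶜ
    rw [hα] at this; exact this

lemma W_smul (c : ℝ) : T.W (fun v => c * p v) Finset.univ Finset.univ Finset.univ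
    = c^3 * T.W p Finset.univ Finset.univ Finset.univ := by
  rw [W_eq, W_eq]
  simp only [Finset.mul_sum]
  refine Finset.sum_congr rfl fun x _ => Finset.sum_congr rfl fun y _ =>
      Finset.sum_congr rfl fun z _ => ?_
  ring

lemma W_restrict (R : Finset V) :
    T.W (fun v => if v ∈ R then p v else 0) Finset.univ Finset.univ Finset.univ = T.W p R R R := by
  rw [W_eq, W_eq, ← Finset.sum_subset (Finset.subset_univ R)]
  · refine Finset.sum_congr rfl fun x hx => ?_
    rw [← Finset.sum_subset (Finset.subset_univ R)]
    · refine Finset.sum_congr rfl fun y hy => ?_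
      rw [← Finset.sum_subset (Finset.subset_univ R)]
      · refine Finset.sum_congr rfl fun z hz => ?_
        simp [hx, hy, hz]
      · intro z _ hz; simp [hz]
    · intro z _ hz; simp [hz]
  · intro z _ hz; simp [hz]

lemma sum_restrict (R : Finset V) : ∑ v, (if v ∈ R then p v else 0) = ∑ v ∈ R, p v := by
  rw [Finset.sum_ite_mem, Finset.univ_inter]

lemma W_perturb (hp : ∀ v, 0 ≤ p v) (v : V) {θ : ℝ} (hθ : 0 ≤ θ) :
    T.W p Finset.univ Finset.univ Finset.univ + 3 * θ * T.L p v Finset.univ Finset.univ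
      ≤ T.W (fun u => p u + θ * (if u = v then 1 else 0)) Finset.univ Finset.univ Finset.univ := by
  set e : V → ℝ := fun u => if u = v then 1 else 0 with he
  have he0 : ∀ u, 0 ≤ e u := fun u => by simp only [he]; split_ifs <;> norm_num
  have a1 : ∑ x, ∑ y, ∑ z, e x * p y * p z * T.w x y z = T.L p v Finset.univ Finset.univ := by
    rw [Finset.sum_eq_single v]
    · simp [he, L]
    · intro b _ hb; simp [he, hb]
    · simp
  have a2 : ∑ x, ∑ y, ∑ z, p x * e y * p z * T.w x y z = T.L p v Finset.univ Finset.univ := by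
    rw [← a1, Finset.sum_comm]
    refine Finset.sum_congr rfl fun x _ => Finset.sum_congr rfl fun y _ =>
      Finset.sum_congr rfl fun z _ => ?_
    rw [w_s12]; ring
  have a3 : ∑ x, ∑ y, ∑ z, p x * p y * e z * T.w x y z = T.L p v Finset.univ Finset.univ := by
    rw [← a2]
    refine Finset.sum_congr rfl fun x _ => ?_
    rw [Finset.sum_comm]
    refine Finset.sum_congr rfl fun y _ => Finset.sum_congr rfl fun z _ => ?_
    rw [w_s23]; ring
  have : T.W p Finset.univ Finset.univ Finset.univ + 3 * θ * T.L p v Finset.univ Finset.univ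
      = ∑ x, ∑ y, ∑ z, (p x * p y * p z * T.w x y z + θ * (e x * p y * p z * T.w x y z)
        + θ * (p x * e y * p z * T.w x y z) + θ * (p x * p y * e z * T.w x y z)) := by
    simp only [Finset.sum_add_distrib, ← Finset.mul_sum]
    rw [a1, a2, a3, W_eq]; ring
  rw [this, W_eq]
  refine Finset.sum_le_sum fun x _ => Finset.sum_le_sum fun y _ =>
      Finset.sum_le_sum fun z _ => ?_
  show _ ≤ (p x + θ * e x) * (p y + θ * e y) * (p z + θ * e z) * T.w x y z
  have hw := T.w_nonneg x y z
  have b1 : 0 ≤ θ * e x := mul_nonneg hθ (he0 x)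
  have b2 : 0 ≤ θ * e y := mul_nonneg hθ (he0 y)
  have b3 : 0 ≤ θ * e z := mul_nonneg hθ (he0 z)
  have c1 := hp x
  have c2 := hp y
  have c3 := hp z
  have : 0 ≤ (p x * (θ * e y) * (θ * e z) + (θ * e x) * p y * (θ * e z)
    + (θ * e x) * (θ * e y) * p z + (θ * e x) * (θ * e y) * (θ * e z)) * T.w x y z := by positivity
  nlinarith

lemma sum_perturb (v : V) (θ : ℝ) :
    ∑ u, (p u + θ * (if u = v then 1 else 0)) = ∑ u, p u + θ := by
  rw [Finset.sum_add_distrib, ← Finset.mul_sum]; simp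

lemma D_le_of_bound (hF : T.Free) {τ : ℝ}
    (hom : ∀ q : V → ℝ, (∀ v, 0 ≤ q v) →
      T.W q Finset.univ Finset.univ Finset.univ ≤ τ * (∑ v, q v)^3)
    (hp : ∀ v, 0 ≤ p v) (h1 : ∑ v, p v = 1) (v : V) {θ : ℝ} (hθ : 0 ≤ θ) :
    T.W p Finset.univ Finset.univ Finset.univ + 3 * θ * T.L p v Finset.univ Finset.univ
      ≤ τ * (1+θ)^3 := by
  have := hom (fun u => p u + θ * (if u = v then 1 else 0))
    (fun u => add_nonneg (hp u) (mul_nonneg hθ (by split_ifs <;> norm_num)))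
  rw [sum_perturb, h1] at this
  exact (W_perturb hp v hθ).trans this

lemma theoremE_aux (hF : T.Free) {τ : ℝ}
    (hom : ∀ q : V → ℝ, (∀ v, 0 ≤ q v) →
      T.W q Finset.univ Finset.univ Finset.univ ≤ τ * (∑ v, q v)^3)
    (hp : ∀ v, 0 ≤ p v) (h1 : ∑ v, p v = 1)
    (ht : τ = T.W p Finset.univ Finset.univ Finset.univ) : τ ≤ 4/9 := by
  by_contra hτ
  push Not at hτ
  obtain ⟨S, hS⟩ := exists_maxIndep T p
  obtain ⟨α, hα⟩ : ∃ α, ∑ x ∈ S, p x = α := ⟨_, rfl⟩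
  have hρ : ∑ r ∈ Sᶜ, p r = 1 - α := by
    have := sum_split S p; linarith
  have hα0 : 0 ≤ α := by rw [← hα]; exact Finset.sum_nonneg fun x _ => hp x
  have hα1 : α ≤ 1 := by
    have : 0 ≤ 1 - α := by rw [← hρ]; exact Finset.sum_nonneg fun x _ => hp x
    linarith
  have hD : ∀ v, T.L p v Finset.univ Finset.univ ≤ τ := by
    intro v
    by_contra h
    push Not at h
    set D := T.L p v Finset.univ Finset.univ
    -- choose θ small
    obtain ⟨θ, h0, hθ1, hθ⟩ : ∃ θ : ℝ, 0 < θ ∧ θ ≤ 1 ∧ 2 * τ * θ < D - τ := by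
      refine ⟨min 1 ((D-τ)/(4*τ)), ?_, min_le_left _ _, ?_⟩
      · have : 0 < (D-τ)/(4*τ) := div_pos (by linarith) (by linarith)
        exact lt_min one_pos this
      · have h3 : min 1 ((D-τ)/(4*τ)) ≤ (D-τ)/(4*τ) := min_le_right _ _
        have h4 : 2 * τ * ((D-τ)/(4*τ)) = (D-τ)/2 := by field_simp; norm_num
        nlinarith
    have := D_le_of_bound hF hom hp h1 v h0.le
    rw [← ht] at this
    have h6 : θ * (3 * D) ≤ θ * (τ * (3 + 3 * θ + θ^2)) := by nlinarith
    have h7 := le_of_mul_le_mul_left h6 h0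
    nlinarith
  have hX : T.W p Sᶜ Sᶜ Sᶜ ≤ τ * (1-α)^3 := by
    have := hom (fun v => if v ∈ Sᶜ then p v else 0) (fun v => by split_ifs <;> simp [hp])
    rw [W_restrict, sum_restrict, hρ] at this
    exact this
  obtain ⟨r1, r2, r3, -⟩ := lemma1 hF hp h1 hS hα hD hX ht
  have hαp : 0 < α := by
    rcases hα0.lt_or_eq with h | h
    · exact h
    · exfalso
      have hd : ∀ x y, T.d p x y Finset.univ ≤ 0 := fun x y => by
        rw [d_univ_eq, h, ← hα]; exact hS.2 _ (nbr_indep hF x y)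
      have : T.W p Finset.univ Finset.univ Finset.univ ≤ 0 := by
        unfold W
        refine Finset.sum_nonpos fun x _ => mul_nonpos_of_nonneg_of_nonpos (hp x) ?_
        rw [L_eq_d]
        exact Finset.sum_nonpos fun y _ => mul_nonpos_of_nonneg_of_nonpos (hp y) (hd _ _)
      linarith
  obtain ⟨b1, b2, b3⟩ := numE_range hαp hτ.le r1
  rcases le_total α (57/100) with c | c
  · have := num2 b1 c hτ.le b3
    nlinarith
  · have h57 : (57/100:ℝ)^2 ≤ α^2 := by nlinarith
    have := r3 (by nlinarith) (by nlinarith)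
    have i1 := num3id α
    have i2 := num3q (a := α) (by linarith)
    have i3 : 0 ≤ (3*α-2)^2*(45*α^3+15*α^2-8*α-4) := mul_nonneg (sq_nonneg _) (by linarith)
    have i4 : 0 < (τ - 4/9) * (α^2 - 3/4*(1-α)*(τ + 4/9 - 2*α^2)) := by
      apply mul_pos (by linarith)
      have : (1-α) * (τ + 4/9 - 2*α^2) ≤ 43/100 * (3/10) := by
        by_cases hs : 0 ≤ τ + 4/9 - 2*α^2
        · apply mul_le_mul <;> nlinarith
        · have : (1-α) * (τ + 4/9 - 2*α^2) ≤ 0 := mul_nonpos_of_nonneg_of_nonpos (by linarith) (by linarith)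
          linarith
      nlinarith
    nlinarith

theorem theoremE (hF : T.Free) (hp : ∀ v, 0 ≤ p v) :
    T.W p Finset.univ Finset.univ Finset.univ ≤ 4/9 * (∑ v, p v)^3 := by
  rcases isEmpty_or_nonempty V with hV | hV
  · simp [W]
  have hc : Continuous fun q : V → ℝ => T.W q Finset.univ Finset.univ Finset.univ := by
    unfold W L; fun_prop
  obtain ⟨q, hq, hmax⟩ := (isCompact_stdSimplex ℝ V).exists_isMaxOn
    (⟨_, single_mem_stdSimplex ℝ (Classical.arbitrary V)⟩) hc.continuousOn
  have hom : ∀ q' : V → ℝ, (∀ v, 0 ≤ q' v) → T.W q' Finset.univ Finset.univ Finset.univ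
      ≤ T.W q Finset.univ Finset.univ Finset.univ * (∑ v, q' v)^3 := by
    intro q' hq'
    rcases (Finset.sum_nonneg fun v (_ : v ∈ Finset.univ) => hq' v).lt_or_eq with h | h
    · set s := ∑ v, q' v with hs
      have hm : (fun v => s⁻¹ * q' v) ∈ stdSimplex ℝ V := by
        refine ⟨fun v => mul_nonneg (inv_nonneg.2 h.le) (hq' v), ?_⟩
        rw [← Finset.mul_sum, ← hs, inv_mul_cancel₀ h.ne']
      have := hmax hm
      simp only [Set.mem_ofPred_eq] at this
      rw [W_smul] at this
      have e : T.W q' Finset.univ Finset.univ Finset.univ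
        = s^3 * (s⁻¹^3 * T.W q' Finset.univ Finset.univ Finset.univ) := by
          field_simp
      rw [e, mul_comm (T.W q _ _ _)]
      exact mul_le_mul_of_nonneg_left this (by positivity)
    · have hz : ∀ v, q' v = 0 := fun v =>
        (Finset.sum_eq_zero_iff_of_nonneg fun v _ => hq' v).1 h.symm v (Finset.mem_univ v)
      rw [← h]; simp [W, hz]
  have hτ := theoremE_aux hF hom hq.1 hq.2 rfl
  refine (hom p hp).trans (mul_le_mul_of_nonneg_right hτ ?_)
  have : 0 ≤ ∑ v, p v := Finset.sum_nonneg fun v _ => hp v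
  positivity

end TG

end PartT2

section PartT3
set_option linter.unusedSectionVars false
set_option linter.unusedVariables false
namespace TG
variable {V : Type} {T : TG V} {p : V → ℝ} [Fintype V] [DecidableEq V]

set_option maxHeartbeats 4000000 in
lemma stability (hF : T.Free) (hp : ∀ v, 0 ≤ p v) (h1 : ∑ v, p v = 1)
    (hD : ∀ v, 4/9 - 1/10^32 ≤ T.L p v Finset.univ Finset.univ) :
    ∃ S : Finset V, ∃ α : ℝ, T.Indep S ∧ ∑ x ∈ S, p x = α ∧ |3 * α - 2| ≤ 1/10^7 ∧
      ∑ r ∈ Sᶜ, p r * (α^2 - T.L p r S S) ≤ 1/10^7 := by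
  obtain ⟨S, hS⟩ := exists_maxIndep T p
  obtain ⟨α, hα⟩ : ∃ α, ∑ x ∈ S, p x = α := ⟨_, rfl⟩
  have hρ : ∑ r ∈ Sᶜ, p r = 1 - α := by
    have := sum_split S p; linarith
  have hα0 : 0 ≤ α := by rw [← hα]; exact Finset.sum_nonneg fun x _ => hp x
  have hα1 : α ≤ 1 := by
    have : 0 ≤ 1 - α := by rw [← hρ]; exact Finset.sum_nonneg fun x _ => hp x
    linarith
  obtain ⟨t, ht⟩ : ∃ t, t = T.W p Finset.univ Finset.univ Finset.univ := ⟨_, rfl⟩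
  have htl : 4/9 - 1/10^32 ≤ t := by
    have : ∑ v, p v * (4/9 - 1/10^32) ≤ t := by
      rw [ht]; unfold W
      exact Finset.sum_le_sum fun v _ => mul_le_mul_of_nonneg_left (hD v) (hp v)
    rw [← Finset.sum_mul, h1] at this
    linarith
  have hDu : ∀ v, T.L p v Finset.univ Finset.univ ≤ 4/9 + 1/10^16 := by
    intro v
    have := D_le_of_bound hF (τ := 4/9) (fun q hq => theoremE hF hq) hp h1 v
      (θ := 1/10^16) (by norm_num)
    rw [← ht] at this
    norm_num at this htl ⊢
    linarith
  have hX : T.W p Sᶜ Sᶜ Sᶜ ≤ 4/9 * (1-α)^3 := by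
    have := theoremE hF (p := fun v => if v ∈ Sᶜ then p v else 0) (fun v => by split_ifs <;> simp [hp])
    rw [W_restrict, sum_restrict, hρ] at this
    exact this
  obtain ⟨r1, r2, r3, r4⟩ := lemma1 hF hp h1 hS hα hDu hX ht
  have hαl : 4/10 ≤ α := by
    have hd : ∀ x y, T.d p x y Finset.univ ≤ α := fun x y => by
      rw [d_univ_eq, ← hα]; exact hS.2 _ (nbr_indep hF x y)
    have hL : ∀ x, T.L p x Finset.univ Finset.univ ≤ α := by
      intro x
      rw [L_eq_d]
      calc _ ≤ ∑ y, p y * α := Finset.sum_le_sum fun y _ => mul_le_mul_of_nonneg_left (hd _ _) (hp y)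
        _ = α := by rw [← Finset.sum_mul, h1, one_mul]
    have : t ≤ α := by
      rw [ht]; unfold W
      calc _ ≤ ∑ y, p y * α := Finset.sum_le_sum fun y _ => mul_le_mul_of_nonneg_left (hL _) (hp y)
        _ = α := by rw [← Finset.sum_mul, h1, one_mul]
    norm_num at htl
    linarith
  have hq : 31*α^2 - 39*α + 12 ≤ 1/1000 := by
    have : α * (31*α^2 - 39*α + 12) ≤ 9/10^32 := by norm_num at htl ⊢; nlinarith
    by_contra h
    push Not at h
    norm_num at this
    nlinarith
  have b1 : 53/100 ≤ α := by nlinarith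
  have b2 : α ≤ 73/100 := by nlinarith
  have hα2 : α^2 ≤ 1 := by nlinarith
  have ht2 : α^2 * (4/9 - 1/10^32) ≤ α^2 * t := mul_le_mul_of_nonneg_left htl (sq_nonneg α)
  have c : 57/100 ≤ α := by
    by_contra c
    push Not at c
    have := num2 (τ := 4/9) b1 c.le (by norm_num) (by norm_num)
    have e : 3/4*(1-α)*(4/9 + 1/10^16-α^2)^2 ≤ 3/4*(1-α)*(4/9-α^2)^2 + 1/10^10 := by
      have : (4/9 + 1/10^16-α^2)^2 ≤ (4/9-α^2)^2 + 1/10^10 := by norm_num; nlinarith [sq_nonneg α]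
      have h0 : 0 ≤ 3/4*(1-α) := by linarith
      have := mul_le_mul_of_nonneg_left this h0
      norm_num at this ⊢
      linarith
    norm_num at e ht2 this r2
    linarith
  have h57 : (57/100:ℝ)^2 ≤ α^2 := by nlinarith
  have key := r3 (by norm_num at h57 ⊢; linarith) (by norm_num at h57 ⊢; nlinarith)
  have hsq : (3*α-2)^2 ≤ (1/10^7)^2 := by
    have i1 := num3id α
    have i2 := num3q (a := α) (by linarith)
    have i3 : (3*α-2)^2*4 ≤ (3*α-2)^2*(45*α^3+15*α^2-8*α-4) :=
      mul_le_mul_of_nonneg_left (by linarith) (sq_nonneg _)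
    have e : 3/4*(1-α)*(4/9 + 1/10^16-α^2)^2 ≤ 3/4*(1-α)*(4/9-α^2)^2 + 1/10^16*(11/100) := by
      have : (4/9 + 1/10^16-α^2)^2 ≤ (4/9-α^2)^2 + 1/10^16*(3/10) := by
        norm_num at h57 ⊢; nlinarith
      have h0 : 0 ≤ 3/4*(1-α) := by linarith
      have := mul_le_mul_of_nonneg_left this h0
      norm_num at this ⊢
      nlinarith
    norm_num at e ht2 key ⊢
    nlinarith
  have habs : |3*α-2| ≤ 1/10^7 := abs_le_of_sq_le_sq hsq (by norm_num)
  refine ⟨S, α, hS.1, hα, habs, ?_⟩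
  obtain ⟨l1, l2⟩ := abs_le.1 habs
  set Mi := ∑ r ∈ Sᶜ, p r * (α^2 - T.L p r S S) with hMi
  have hMi0 : 0 ≤ Mi := Finset.sum_nonneg fun r _ => mul_nonneg (hp r) (by
    have := L_le (T := T) hp r S S
    rw [hα] at this; nlinarith)
  have hgm : 3*(1-α)*α^4 ≤ 4/9*α^2 := by
    have : 3*(1-α)*α^2 ≤ 4/9 := by nlinarith [mul_nonneg hα0 (sq_nonneg (α-2/3)), sq_nonneg (α-2/3)]
    nlinarith [sq_nonneg α]
  have hco : 3/10 ≤ 3/2*α^2 - 3*(1-α)^2 := by norm_num at l1 l2; nlinarith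
  have hs : 4/9 + 1/10^16 - α^2 ≤ 5/10^8 := by norm_num at l1 l2 ⊢; nlinarith
  have h5 : 3/2*α^2*(1-α)*(4/9 + 1/10^16 - α^2) ≤ 3/2*α^2*(1-α)*(5/10^8) :=
    mul_le_mul_of_nonneg_left hs (by have := sq_nonneg α; have : 0 ≤ 1-α := by linarith
                                     positivity)
  have h6 : α^2*(1-α) ≤ 2/10 := by norm_num at l1 l2; nlinarith
  have h7 : 3/10 * Mi ≤ (3/2*α^2 - 3*(1-α)^2) * Mi := mul_le_mul_of_nonneg_right hco hMi0
  norm_num at h5 ht2 r4 h6 ⊢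
  nlinarith

/-- The basic inequalities for a vertex relative to the partition. -/
lemma PQ_le (hF : T.Free) (hp : ∀ v, 0 ≤ p v) {S : Finset V} {α : ℝ} (hα : ∑ x ∈ S, p x = α) (v : V) :
    T.L p v S S * T.L p v S Sᶜ ≤ 2 * α * ∑ r ∈ Sᶜ, p r * (α^2 - T.L p r S S) := by
  have hd : ∀ r ∈ Sᶜ, p r * (α^2 - T.L p r S S) = ∑ s ∈ S, p r * p s * (α - T.d p r s S) := by
    intro r _
    rw [L_eq_d, sq]
    nth_rewrite 1 [← hα]
    rw [Finset.sum_mul, ← Finset.sum_sub_distrib, Finset.mul_sum]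
    exact Finset.sum_congr rfl fun s _ => by ring
  rw [Finset.sum_congr rfl hd, L_comm v S Sᶜ]
  conv_lhs => rw [mul_comm]
  rw [show T.L p v Sᶜ S = ∑ x ∈ Sᶜ, ∑ y ∈ S, p x * p y * T.w v x y from rfl, Finset.sum_mul, Finset.mul_sum]
  refine Finset.sum_le_sum fun r _ => ?_
  rw [Finset.sum_mul, Finset.mul_sum]
  refine Finset.sum_le_sum fun s _ => ?_
  have h0 := mul_nonneg (hp r) (hp s)
  have hα0 : 0 ≤ α := by rw [← hα]; exact Finset.sum_nonneg fun x _ => hp x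
  have hds : 0 ≤ α - T.d p r s S := by rw [← hα]; linarith [d_le (T := T) hp r s S]
  by_cases hE : T.E v r s
  · rw [w_eq_one hE, mul_one]
    have : T.L p v S S ≤ 2 * α * (α - T.d p r s S) := by
      have e : 2 * α * (α - T.d p r s S) = ∑ x ∈ S, ∑ y ∈ S, p x * p y * ((1 - T.w r s x) + (1 - T.w r s y)) := by
        have e1 : α - T.d p r s S = ∑ x ∈ S, p x * (1 - T.w r s x) := by
          rw [← hα]; unfold d; rw [← Finset.sum_sub_distrib]
          exact Finset.sum_congr rfl fun x _ => by ring
        have e2 : ∑ x ∈ S, ∑ y ∈ S, p x * p y * (1 - T.w r s x) = α * (α - T.d p r s S) := by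
          rw [e1, ← hα, mul_comm, Finset.sum_mul_sum]
          exact Finset.sum_congr rfl fun x _ => Finset.sum_congr rfl fun y _ => by ring
        have e3 : ∑ x ∈ S, ∑ y ∈ S, p x * p y * (1 - T.w r s y) = α * (α - T.d p r s S) := by
          rw [e1, ← hα, Finset.sum_mul_sum]
          exact Finset.sum_congr rfl fun x _ => Finset.sum_congr rfl fun y _ => by ring
        simp only [mul_add, Finset.sum_add_distrib]
        rw [e2, e3]; ring
      rw [e]
      unfold L
      refine Finset.sum_le_sum fun x _ => Finset.sum_le_sum fun y _ => ?_
      refine mul_le_mul_of_nonneg_left ?_ (mul_nonneg (hp x) (hp y))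
      by_cases hx : T.E r s x
      · by_cases hy : T.E r s y
        · have : ¬ T.E v x y := hF r s v x y (T.s23 (T.s12 hE)) hx hy
          rw [w_eq_zero this, w_eq_one hx, w_eq_one hy]; norm_num
        · rw [w_eq_zero hy]; linarith [T.w_le r s x, T.w_le v x y]
      · rw [w_eq_zero hx]; linarith [T.w_le r s y, T.w_le v x y]
    nlinarith
  · rw [w_eq_zero hE]
    have : 0 ≤ p r * p s * (α - T.d p r s S) := mul_nonneg h0 hds
    nlinarith

lemma PM_le (hF : T.Free) (hp : ∀ v, 0 ≤ p v) {S : Finset V} {α : ℝ} (hα : ∑ x ∈ S, p x = α)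
    (v : V) : T.L p v S S * T.L p v Sᶜ Sᶜ ≤
      2 * (∑ x ∈ Sᶜ, p x) * ∑ r ∈ Sᶜ, p r * (α^2 - T.L p r S S) := by
  set f : V → ℝ := fun r => α^2 - T.L p r S S with hf
  have f0 : ∀ r, 0 ≤ f r := fun r => by
    have := L_le (T := T) hp r S S
    rw [hα] at this; simp only [hf]; nlinarith
  have e : 2 * (∑ x ∈ Sᶜ, p x) * ∑ r ∈ Sᶜ, p r * f r
      = ∑ b ∈ Sᶜ, ∑ c ∈ Sᶜ, p b * p c * (f b + f c) := by
    have e1 : ∑ b ∈ Sᶜ, ∑ c ∈ Sᶜ, p b * p c * f b = (∑ x ∈ Sᶜ, p x) * ∑ r ∈ Sᶜ, p r * f r := by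
      rw [mul_comm, Finset.sum_mul_sum]
      exact Finset.sum_congr rfl fun x _ => Finset.sum_congr rfl fun y _ => by ring
    have e2 : ∑ b ∈ Sᶜ, ∑ c ∈ Sᶜ, p b * p c * f c = (∑ x ∈ Sᶜ, p x) * ∑ r ∈ Sᶜ, p r * f r := by
      rw [Finset.sum_mul_sum]
      exact Finset.sum_congr rfl fun x _ => Finset.sum_congr rfl fun y _ => by ring
    simp only [mul_add, Finset.sum_add_distrib]
    rw [e1, e2]; ring
  rw [e, mul_comm, show T.L p v Sᶜ Sᶜ = ∑ x ∈ Sᶜ, ∑ y ∈ Sᶜ, p x * p y * T.w v x y from rfl,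
    Finset.sum_mul]
  refine Finset.sum_le_sum fun b _ => ?_
  rw [Finset.sum_mul]
  refine Finset.sum_le_sum fun c _ => ?_
  have h0 := mul_nonneg (hp b) (hp c)
  rw [mul_assoc]
  refine mul_le_mul_of_nonneg_left ?_ h0
  by_cases hE : T.E v b c
  · have := three_sum hF hp hE (P := S) (Q := S)
    rw [hα] at this
    rw [w_eq_one hE]; simp only [hf]; nlinarith
  · rw [w_eq_zero hE]; linarith [f0 b, f0 c]

lemma qqm_le (hF : T.Free) (hp : ∀ v, 0 ≤ p v) {S : Finset V} {α : ℝ} (hα : ∑ x ∈ S, p x = α)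
    (v x : V) : (T.d p v x S)^2 * T.d p v x Sᶜ ≤ ∑ r ∈ Sᶜ, p r * (α^2 - T.L p r S S) := by
  have e : ∀ r, p r * (α^2 - T.L p r S S) = ∑ y ∈ S, ∑ z ∈ S, p r * p y * p z * (1 - T.w r y z) := by
    intro r
    rw [sq, ← hα, Finset.sum_mul_sum]
    unfold L
    rw [← Finset.sum_sub_distrib, Finset.mul_sum]
    refine Finset.sum_congr rfl fun y _ => ?_
    rw [← Finset.sum_sub_distrib, Finset.mul_sum]
    exact Finset.sum_congr rfl fun z _ => by ring
  have e2 : (T.d p v x S)^2 * T.d p v x Sᶜ = ∑ r ∈ Sᶜ, ∑ y ∈ S, ∑ z ∈ S,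
      p r * p y * p z * (T.w v x r * T.w v x y * T.w v x z) := by
    rw [sq, mul_comm]
    unfold d
    rw [Finset.sum_mul_sum, Finset.sum_mul]
    refine Finset.sum_congr rfl fun r _ => ?_
    rw [Finset.mul_sum]
    refine Finset.sum_congr rfl fun y _ => ?_
    rw [Finset.mul_sum]
    exact Finset.sum_congr rfl fun z _ => by ring
  rw [e2]
  refine Finset.sum_le_sum fun r _ => ?_
  rw [e]
  refine Finset.sum_le_sum fun y _ => Finset.sum_le_sum fun z _ => ?_
  refine mul_le_mul_of_nonneg_left ?_ (mul_nonneg (mul_nonneg (hp r) (hp y)) (hp z))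
  have hn : 0 ≤ 1 - T.w r y z := by linarith [T.w_le r y z]
  by_cases h1 : T.E v x r
  · by_cases h2 : T.E v x y
    · by_cases h3 : T.E v x z
      · rw [w_eq_zero (hF v x r y z h1 h2 h3), w_eq_one h1, w_eq_one h2, w_eq_one h3]; norm_num
      · rw [w_eq_zero h3]; simpa using hn
    · rw [w_eq_zero h2]; simpa using hn
  · rw [w_eq_zero h1]; simpa using hn

/-- Edge `a b s`: the codegree of `a,s` into `S`. -/
lemma dd_le (hF : T.Free) (hp : ∀ v, 0 ≤ p v) {S : Finset V} {α : ℝ} (hα : ∑ x ∈ S, p x = α)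
    {a b s : V} (h : T.E a s b) : (T.d p a s S)^2 ≤ α^2 - T.L p b S S := by
  rw [sq, sq, ← hα, Finset.sum_mul_sum]
  unfold d L
  rw [Finset.sum_mul_sum, ← Finset.sum_sub_distrib]
  refine Finset.sum_le_sum fun y _ => ?_
  rw [← Finset.sum_sub_distrib]
  refine Finset.sum_le_sum fun z _ => ?_
  have h0 := mul_nonneg (hp y) (hp z)
  suffices T.w a s y * T.w a s z ≤ 1 - T.w b y z by nlinarith
  have hn : 0 ≤ 1 - T.w b y z := by linarith [T.w_le b y z]
  by_cases h2 : T.E a s y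
  · by_cases h3 : T.E a s z
    · rw [w_eq_zero (hF a s b y z h h2 h3), w_eq_one h2, w_eq_one h3]; norm_num
    · rw [w_eq_zero h3]; simpa using hn
  · rw [w_eq_zero h2]; simpa using hn

end TG

end PartT3

section PartT4
set_option linter.unusedSectionVars false
set_option linter.unusedVariables false
namespace TG
variable {V : Type} {T : TG V} {p : V → ℝ} [Fintype V] [DecidableEq V]

lemma real_typeR {P Q M a ξ : ℝ} (hP : 0 ≤ P) (hM : 0 ≤ M) (hQ0 : 0 ≤ Q) (hM' : M ≤ 112/1000)
    (hD : 4/9 - 1/10^32 ≤ P + 2*Q + M) (hPM : P * M ≤ 2/10^7) (hQ : Q ≤ 45/100000) :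
    4/9 - 1/100 ≤ P := by
  have h1 : 1/4 ≤ P := by norm_num at hD ⊢; linarith
  have h2 : M ≤ 8/10^7 := by
    by_contra h
    push Not at h
    norm_num at h hPM
    nlinarith
  norm_num at hD h2 ⊢
  linarith

open Classical in
lemma typeS (hF : T.Free) (hp : ∀ v, 0 ≤ p v) (h1 : ∑ v, p v = 1) {S : Finset V} {α : ℝ}
    (hα : ∑ x ∈ S, p x = α) (hαb : |3 * α - 2| ≤ 1/10^7)
    (hMi : ∑ r ∈ Sᶜ, p r * (α^2 - T.L p r S S) ≤ 1/10^7) (v : V)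
    (hD : 4/9 - 1/1000 ≤ 2 * T.L p v S Sᶜ + T.L p v Sᶜ Sᶜ) :
    2/9 - 3/100 ≤ T.L p v S Sᶜ := by
  have hρ : ∑ r ∈ Sᶜ, p r = 1 - α := by
    have := sum_split S p; linarith
  obtain ⟨l1, l2⟩ := abs_le.1 hαb
  norm_num at l1 l2
  set R := Sᶜ with hR
  set R1 := R.filter fun x => 5/1000 < T.d p v x S with hR1
  set R2 := R.filter fun x => ¬ (5/1000 < T.d p v x S) with hR2
  have split : ∀ f : V → ℝ, ∑ x ∈ R, f x = ∑ x ∈ R1, f x + ∑ x ∈ R2, f x := fun f =>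
    (Finset.sum_filter_add_sum_filter_not R _ f).symm
  set r1 := ∑ x ∈ R1, p x with hr1
  set r2 := ∑ x ∈ R2, p x with hr2
  have hr12 : r1 + r2 = 1 - α := by rw [← hρ, split]
  have hr1' : 0 ≤ r1 := Finset.sum_nonneg fun x _ => hp x
  have hr2' : 0 ≤ r2 := Finset.sum_nonneg fun x _ => hp x
  have hm : ∀ x ∈ R1, T.d p v x R ≤ 4/1000 := by
    intro x hx
    have hx' := (Finset.mem_filter.1 hx).2
    have := (qqm_le hF hp hα v x).trans hMi
    have hd := d_nonneg (T := T) hp v x R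
    have h3 : (5/1000)^2 ≤ (T.d p v x S)^2 := by nlinarith
    by_contra h
    push Not at h
    have h4 : (5/1000:ℝ)^2 * (4/1000) < (T.d p v x S)^2 * T.d p v x R := by
      apply mul_lt_mul' h3 h (by norm_num)
      norm_num at h3 ⊢; linarith
    rw [hR] at h4
    norm_num at h4 this
    linarith
  have hM1 : T.L p v R1 R ≤ 4/1000 * r1 := by
    rw [L_eq_d, hr1, Finset.mul_sum]
    exact Finset.sum_le_sum fun x hx => by
      have := mul_le_mul_of_nonneg_left (hm x hx) (hp x); linarith
  have hM : T.L p v R R ≤ 8/1000 * r1 + r2^2 := by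
    have e1 : T.L p v R R = T.L p v R1 R + T.L p v R2 R := split _
    have e2 : T.L p v R2 R = T.L p v R2 R1 + T.L p v R2 R2 := by
      rw [L_comm v R2 R, L_comm v R2 R1, L_comm v R2 R2]
      exact split _
    have e3 : T.L p v R2 R1 ≤ T.L p v R1 R := by
      rw [L_comm]; exact L_mono hp v (le_refl _) (Finset.filter_subset _ _)
    have e4 := L_le (T := T) hp v R2 R2
    rw [← hr2] at e4
    nlinarith
  have hQ : T.L p v S R ≤ α * r1 + 5/1000 * r2 := by
    have e1 : T.L p v S R = T.L p v R1 S + T.L p v R2 S := by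
      rw [L_comm]; exact split _
    have e2 := L_le (T := T) hp v R1 S
    rw [← hr1, hα] at e2
    have e3 : T.L p v R2 S ≤ 5/1000 * r2 := by
      rw [L_eq_d, hr2, Finset.mul_sum]
      exact Finset.sum_le_sum fun x hx => by
        have := mul_le_mul_of_nonneg_left (not_lt.1 (Finset.mem_filter.1 hx).2) (hp x); linarith
    linarith
  obtain ⟨e, he⟩ : ∃ e, α = 2/3 + e := ⟨α - 2/3, by ring⟩
  have hr2e : r2 = 1/3 - e - r1 := by linarith
  have he1 : e ≤ 1/1000000 := by linarith
  have he2 : -(1/1000000) ≤ e := by linarith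
  have hr1b : 30/100 ≤ r1 := by
    by_contra h
    push Not at h
    rw [hr2e] at hM hQ hr2'
    rw [he] at hQ
    nlinarith
  have : r2 ≤ 4/100 := by linarith
  nlinarith

lemma L_smul (c : ℝ) (v : V) (P Q : Finset V) :
    T.L (fun u => c * p u) v P Q = c^2 * T.L p v P Q := by
  unfold L
  simp only [Finset.mul_sum]
  refine Finset.sum_congr rfl fun x _ => Finset.sum_congr rfl fun y _ => ?_
  ring

open Classical in
theorem theoremD (hF : T.Free) {n : ℝ} (hn : n = Fintype.card V) (hn0 : 100 ≤ n)
    (hD : ∀ v, (4/9 - 1/10^32) * n^2 ≤ T.L (fun _ => 1) v Finset.univ Finset.univ) :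
    ∃ R : Finset V, T.W (fun _ => 1) Finset.univ Finset.univ Finset.univ
        ≤ 3 * (R.card * (Rᶜ.card * ((Rᶜ.card : ℝ) - 1))) ∧
      (T.W (fun _ => 1) Finset.univ Finset.univ Finset.univ
        = 3 * (R.card * (Rᶜ.card * ((Rᶜ.card : ℝ) - 1))) →
        (∀ a ∈ R, ∀ b ∈ R, ∀ c, ¬ T.E a b c) ∧ (∀ a ∉ R, ∀ b ∉ R, ∀ c ∉ R, ¬ T.E a b c)) := by
  have hnp : 0 < n := by linarith
  obtain ⟨p, hpdef⟩ : ∃ p : V → ℝ, p = fun _ => n⁻¹ * 1 := ⟨_, rfl⟩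
  have hpv : ∀ v, p v = n⁻¹ := fun v => by rw [hpdef]; simp
  have hp : ∀ v, 0 ≤ p v := fun v => by rw [hpv]; positivity
  have hsum : ∀ P : Finset V, ∑ v ∈ P, p v = n⁻¹ * P.card := fun P => by
    simp only [hpv, Finset.sum_const, nsmul_eq_mul]; ring
  have h1 : ∑ v, p v = 1 := by
    rw [hsum, Finset.card_univ, ← hn, inv_mul_cancel₀ hnp.ne']
  have hD' : ∀ v, 4/9 - 1/10^32 ≤ T.L p v Finset.univ Finset.univ := by
    intro v
    rw [hpdef, L_smul]
    have := mul_le_mul_of_nonneg_left (hD v) (sq_nonneg n⁻¹)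
    have e : n⁻¹^2 * ((4/9 - 1/10^32) * n^2) = 4/9 - 1/10^32 := by field_simp
    linarith
  obtain ⟨S, α, hS, hα, hαb, hMi⟩ := stability hF hp h1 hD'
  have hρ : ∑ r ∈ Sᶜ, p r = 1 - α := by
    have := sum_split S p; linarith
  obtain ⟨l1, l2⟩ := abs_le.1 hαb
  norm_num at l1 l2
  have hMi0 : 0 ≤ ∑ r ∈ Sᶜ, p r * (α^2 - T.L p r S S) :=
    Finset.sum_nonneg fun r _ => mul_nonneg (hp r) (by
      have := L_le (T := T) hp r S S
      rw [hα] at this; nlinarith)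
  have hα2 : α^2 ≤ 445/1000 := by nlinarith
  have class_ : ∀ v, 4/9 - 1/100 ≤ T.L p v S S ∨ 2/9 - 3/100 ≤ T.L p v S Sᶜ := by
    intro v
    have hPQ : T.L p v S S * T.L p v S Sᶜ ≤ 2/10^7 := by
      refine (PQ_le hF hp hα v).trans ?_
      norm_num at hMi ⊢; nlinarith
    have hPM : T.L p v S S * T.L p v Sᶜ Sᶜ ≤ 2/10^7 := by
      refine (PM_le hF hp hα v).trans ?_
      rw [hρ]
      norm_num at hMi ⊢; nlinarith
    have hdv := hD' v
    rw [L_split S] at hdv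
    have hP0 := L_nonneg (T := T) hp v S S
    have hQ0 := L_nonneg (T := T) hp v S Sᶜ
    have hM0 := L_nonneg (T := T) hp v Sᶜ Sᶜ
    have hM1 : T.L p v Sᶜ Sᶜ ≤ 112/1000 := by
      have := L_le (T := T) hp v Sᶜ Sᶜ
      rw [hρ] at this; nlinarith
    by_cases hq : T.L p v S Sᶜ ≤ 45/100000
    · left; exact real_typeR (a := 0) (ξ := 0) hP0 hM0 hQ0 hM1 hdv hPM hq
    · right
      push Not at hq
      have : T.L p v S S ≤ 45/100000 := by
        by_contra h
        push Not at h
        norm_num at hPQ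
        nlinarith
      refine typeS hF hp h1 hα hαb hMi v ?_
      norm_num at hdv ⊢; linarith
  set R : Finset V := Finset.univ.filter fun v => 4/9 - 1/100 ≤ T.L p v S S with hR
  have memR : ∀ {v}, v ∈ R ↔ 4/9 - 1/100 ≤ T.L p v S S := fun {v} => by simp [hR]
  have memS : ∀ {v}, v ∉ R → 2/9 - 3/100 ≤ T.L p v S Sᶜ := fun {v} h =>
    (class_ v).resolve_left fun h' => h (memR.2 h')
  have noR : T.Indep R := by
    intro a ha b hb c hc hE
    have := three_sum hF hp hE (P := S) (Q := S)
    rw [hα] at this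
    have := memR.1 ha; have := memR.1 hb; have := memR.1 hc
    nlinarith
  have noS : T.Indep Rᶜ := by
    intro a ha b hb c hc hE
    have := three_sum hF hp hE (P := S) (Q := Sᶜ)
    rw [hα, hρ] at this
    have := memS (Finset.mem_compl.1 ha); have := memS (Finset.mem_compl.1 hb)
    have := memS (Finset.mem_compl.1 hc)
    nlinarith
  have hSsub : S ⊆ Rᶜ := by
    intro s hs
    rw [Finset.mem_compl, memR]
    have : T.L p s S S = 0 := by
      unfold L
      refine Finset.sum_eq_zero fun x hx => Finset.sum_eq_zero fun y hy => ?_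
      rw [w_eq_zero (hS s hs x hx y hy), mul_zero]
    rw [this]; norm_num
  have hScard : 6/10 * n ≤ (Rᶜ.card : ℝ) := by
    have h2 : (S.card : ℝ) ≤ Rᶜ.card := by exact_mod_cast Finset.card_le_card hSsub
    have h3 : n⁻¹ * S.card = α := by rw [← hsum, hα]
    have h4 : (S.card : ℝ) = α * n := by rw [← h3, mul_comm n⁻¹, mul_assoc, inv_mul_cancel₀ hnp.ne', mul_one]
    nlinarith
  -- codegrees
  have hdsc : ∀ a s P, T.d (fun _ => 1) a s P = n * T.d p a s P := by
    intro a s P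
    unfold d
    rw [Finset.mul_sum]
    refine Finset.sum_congr rfl fun x _ => ?_
    rw [hpv, ← mul_assoc, mul_inv_cancel₀ hnp.ne']
  have strict : ∀ a s b, b ∈ R → T.E a s b →
      T.d (fun _ => 1) a s Finset.univ < (Rᶜ.card : ℝ) - 1 := by
    intro a s b hb hE
    have h2 := dd_le hF hp hα hE
    have h3 := memR.1 hb
    have h4 := d_nonneg (T := T) hp a s S
    have h5 : T.d p a s S ≤ 11/100 := by nlinarith
    have h6 := d_le (T := T) hp a s Sᶜ
    rw [hρ] at h6
    rw [hdsc, d_split S]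
    have : n * (T.d p a s S + T.d p a s Sᶜ) ≤ n * (45/100) :=
      mul_le_mul_of_nonneg_left (by linarith) hnp.le
    linarith
  have weak : ∀ a ∈ R, ∀ s ∈ Rᶜ, T.d (fun _ => 1) a s Finset.univ ≤ (Rᶜ.card : ℝ) - 1 := by
    intro a ha s hs
    by_cases h : ∃ b ∈ R, T.E a s b
    · obtain ⟨b, hb, hE⟩ := h
      exact (strict a s b hb hE).le
    · push Not at h
      rw [d_univ_eq]
      simp only [Finset.sum_const, nsmul_eq_mul, mul_one]
      have hsub : (Finset.univ.filter fun z => T.E a s z) ⊆ Rᶜ.erase s := by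
        intro z hz
        have hz' : T.E a s z := (Finset.mem_filter.1 hz).2
        rw [Finset.mem_erase, Finset.mem_compl]
        exact ⟨fun e => T.ne (T.s12 (T.s23 (T.s12 hz'))) e, fun hzR => h z hzR hz'⟩
      have := Finset.card_le_card hsub
      rw [Finset.card_erase_of_mem hs] at this
      have h1 : 1 ≤ Rᶜ.card := Finset.card_pos.2 ⟨s, hs⟩
      have h2 : (((Finset.univ.filter fun z => T.E a s z).card : ℕ) : ℝ) ≤ ((Rᶜ.card - 1 : ℕ) : ℝ) := by
        exact_mod_cast this
      rw [Nat.cast_sub h1] at h2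
      simpa using h2
  have hW : T.W (fun _ => 1) Finset.univ Finset.univ Finset.univ
      = 3 * ∑ a ∈ R, ∑ s ∈ Rᶜ, T.d (fun _ => 1) a s Finset.univ := by
    have e0 : T.W (fun _ => 1) R R R = 0 := W_indep noR
    have e1 : T.W (fun _ => 1) Rᶜ Rᶜ Rᶜ = 0 := W_indep noS
    have e2 := W_split (T := T) (p := fun _ => 1) R
    have e3 : T.W (fun _ => 1) Rᶜ R R = T.W (fun _ => 1) R Rᶜ R := W_comm12 _ _ _
    have e4 : T.W (fun _ => 1) Rᶜ R Rᶜ = T.W (fun _ => 1) R Rᶜ Rᶜ := W_comm12 _ _ _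
    have e5 : ∑ a ∈ R, ∑ s ∈ Rᶜ, T.d (fun _ => 1) a s Finset.univ
        = T.W (fun _ => 1) R Rᶜ R + T.W (fun _ => 1) R Rᶜ Rᶜ := by
      unfold W
      rw [← Finset.sum_add_distrib]
      refine Finset.sum_congr rfl fun a _ => ?_
      rw [L_eq_d, L_eq_d, ← mul_add, ← Finset.sum_add_distrib, one_mul]
      refine Finset.sum_congr rfl fun s _ => ?_
      rw [d_split R]; ring
    rw [e2, e0, e1, e3, e4, e5]; ring
  have hconst : (R.card : ℝ) * (Rᶜ.card * ((Rᶜ.card : ℝ) - 1))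
      = ∑ a ∈ R, ∑ s ∈ Rᶜ, ((Rᶜ.card : ℝ) - 1) := by
    simp only [Finset.sum_const, nsmul_eq_mul]
  refine ⟨R, ?_, ?_⟩
  · rw [hW, hconst]
    have := Finset.sum_le_sum fun a ha => Finset.sum_le_sum fun s hs => weak a ha s hs
    linarith
  · intro heq
    rw [hW, hconst] at heq
    refine ⟨?_, fun a ha b hb c hc => noS a (Finset.mem_compl.2 ha) b (Finset.mem_compl.2 hb) c
      (Finset.mem_compl.2 hc)⟩
    intro a ha b hb c hE
    have hc : c ∈ Rᶜ := by
      rw [Finset.mem_compl]; intro hc; exact noR a ha b hb c hc hE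
    have hlt : ∑ a ∈ R, ∑ s ∈ Rᶜ, T.d (fun _ => 1) a s Finset.univ
        < ∑ a ∈ R, ∑ s ∈ Rᶜ, ((Rᶜ.card : ℝ) - 1) :=
      Finset.sum_lt_sum (fun a ha => Finset.sum_le_sum fun s hs => weak a ha s hs)
        ⟨a, ha, Finset.sum_lt_sum (fun s hs => weak a ha s hs)
          ⟨c, hc, strict a c b hb (T.s23 hE)⟩⟩
    linarith

end TG

end PartT4

section PartH1
set_option linter.unusedSectionVars false
set_option linter.unusedVariables false
open HGraph

lemma triple_ne {x y z : ℕ} (h : ({x, y, z} : Finset ℕ).card = 3) : x ≠ y ∧ x ≠ z ∧ y ≠ z := by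
  refine ⟨?_, ?_, ?_⟩ <;> rintro rfl
  · have : ({x, x, z} : Finset ℕ).card ≤ 2 := by simpa using Finset.card_le_two (a := x) (b := z)
    omega
  · have : ({x, y, x} : Finset ℕ).card ≤ 2 := by
      have : ({x, y, x} : Finset ℕ) = {x, y} := by ext; simp; tauto
      rw [this]; exact Finset.card_le_two
    omega
  · have : ({x, y, y} : Finset ℕ).card ≤ 2 := by simpa using Finset.card_le_two (a := x) (b := y)
    omega

def toTG (H : HGraph 3) : TG H.verts where
  E x y z := ({x.1, y.1, z.1} : Finset ℕ) ∈ H.edges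
  s12 {x y z} h := by rwa [Finset.insert_comm]
  s23 {x y z} h := by
    have : ({x.1, z.1, y.1} : Finset ℕ) = {x.1, y.1, z.1} := by ext; simp; tauto
    rwa [this]
  ne {x y z} h e := (triple_ne (H.edges_card _ h)).1 (congrArg Subtype.val e)

lemma F32_verts : F32.verts = Finset.Icc 1 5 := rfl

lemma F32_edges : F32.edges = {{1,2,3},{1,2,4},{1,2,5},{3,4,5}} := by
  decide

lemma isCopy_of (H : HGraph 3) {x y a b c : ℕ} (h1 : ({x, y, a} : Finset ℕ) ∈ H.edges)
    (h2 : ({x, y, b} : Finset ℕ) ∈ H.edges) (h3 : ({x, y, c} : Finset ℕ) ∈ H.edges)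
    (h4 : ({a, b, c} : Finset ℕ) ∈ H.edges) : F32.IsCopyIn H := by
  obtain ⟨n1, n2, n3⟩ := triple_ne (H.edges_card _ h1)
  obtain ⟨-, n4, n5⟩ := triple_ne (H.edges_card _ h2)
  obtain ⟨-, n6, n7⟩ := triple_ne (H.edges_card _ h3)
  obtain ⟨n8, n9, n10⟩ := triple_ne (H.edges_card _ h4)
  have v1 := H.edges_sub _ h1
  have v4 := H.edges_sub _ h4
  refine ⟨fun i => if i = 1 then x else if i = 2 then y else if i = 3 then a else
    if i = 4 then b else c, ?_, ?_, ?_⟩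
  · intro i hi j hj
    rw [F32_verts] at hi hj
    simp only [Finset.coe_Icc, Set.mem_Icc] at hi hj
    obtain ⟨i1, i2⟩ := hi
    obtain ⟨j1, j2⟩ := hj
    interval_cases i <;> interval_cases j <;> simp <;> intro h <;> simp_all
  · intro i hi
    rw [F32_verts] at hi
    simp only [Finset.mem_Icc] at hi
    obtain ⟨i1, i2⟩ := hi
    interval_cases i <;> simp
    · exact v1 (by simp)
    · exact v1 (by simp)
    · exact v4 (by simp)
    · exact v4 (by simp)
    · exact v4 (by simp)
  · intro e he
    rw [F32_edges] at he
    simp only [Finset.mem_insert, Finset.mem_singleton] at he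
    rcases he with rfl | rfl | rfl | rfl <;> simpa [Finset.image_insert]

lemma toTG_free {H : HGraph 3} (h : ¬ F32.IsCopyIn H) : (toTG H).Free := by
  intro x y a b c h1 h2 h3 h4
  exact h (isCopy_of H h1 h2 h3 h4)

lemma semibip_noCopy {H : HGraph 3} (h : Semibipartite 3 H) : ¬ F32.IsCopyIn H := by
  rintro ⟨f, hf, hv, he⟩
  obtain ⟨V₁, hV, h1⟩ := h
  have inj : ∀ i j, 1 ≤ i → i ≤ 5 → 1 ≤ j → j ≤ 5 → i ≠ j → f i ≠ f j := by
    intro i j a b c d hij e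
    exact hij (hf (by rw [F32_verts]; simp; omega) (by rw [F32_verts]; simp; omega) e)
  rw [F32_edges] at he
  have key : ∀ i j k, 1 ≤ i → i < j → j < k → k ≤ 5 → ({i,j,k} : Finset ℕ).image f ∈ H.edges →
      ((if f i ∈ V₁ then 1 else 0) + (if f j ∈ V₁ then 1 else 0) + (if f k ∈ V₁ then 1 else 0) = 1) := by
    intro i j k a b c d h
    have := h1 _ h
    have n1 := inj i j a (by omega) (by omega) (by omega) (by omega)
    have n2 := inj i k a (by omega) (by omega) (by omega) (by omega)
    have n3 := inj j k (by omega) (by omega) (by omega) (by omega) (by omega)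
    rw [← Finset.filter_mem_eq_inter, Finset.card_filter] at this
    rw [Finset.image_insert, Finset.image_insert, Finset.image_singleton,
      Finset.sum_insert (by simp [n1, n2]), Finset.sum_insert (by simp [n3]), Finset.sum_singleton] at this
    omega
  have k1 := key 1 2 3 (by omega) (by omega) (by omega) (by omega) (he _ (by simp))
  have k2 := key 1 2 4 (by omega) (by omega) (by omega) (by omega) (he _ (by simp))
  have k3 := key 1 2 5 (by omega) (by omega) (by omega) (by omega) (he _ (by simp))
  have k4 := key 3 4 5 (by omega) (by omega) (by omega) (by omega) (he _ (by simp))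
  split_ifs at * <;> omega

lemma edge_eq_of_mem {H : HGraph 3} {e : Finset ℕ} (he : e ∈ H.edges) {v : ℕ} (hv : v ∈ e) :
    ∃ b c, e = {v, b, c} ∧ v ≠ b ∧ v ≠ c ∧ b ≠ c := by
  have h3 := H.edges_card e he
  have h2 : (e.erase v).card = 2 := by rw [Finset.card_erase_of_mem hv, h3]
  obtain ⟨b, c, hbc, he2⟩ := Finset.card_eq_two.1 h2
  refine ⟨b, c, ?_, ?_, ?_, hbc⟩
  · rw [← Finset.insert_erase hv, he2]
  · rintro rfl
    have : v ∈ e.erase v := by rw [he2]; simp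
    simp at this
  · rintro rfl
    have : v ∈ e.erase v := by rw [he2]; simp
    simp at this

lemma pair_count (H : HGraph 3) (v : ℕ) :
    ((H.verts ×ˢ H.verts).filter fun q : ℕ × ℕ => ({v, q.1, q.2} : Finset ℕ) ∈ H.edges).card
      = 2 * H.deg v := by
  unfold HGraph.deg
  rw [Finset.card_eq_sum_card_fiberwise (f := fun q : ℕ × ℕ => ({v, q.1, q.2} : Finset ℕ))
    (t := H.edges.filter fun e => v ∈ e)]
  · rw [Finset.sum_const_nat (m := 2), mul_comm]
    intro e he
    obtain ⟨he1, he2⟩ := Finset.mem_filter.1 he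
    obtain ⟨b, c, rfl, n1, n2, n3⟩ := edge_eq_of_mem he1 he2
    have : ((H.verts ×ˢ H.verts).filter fun q : ℕ × ℕ => ({v, q.1, q.2} : Finset ℕ) ∈ H.edges).filter
        (fun q : ℕ × ℕ => ({v, q.1, q.2} : Finset ℕ) = {v, b, c}) = {(b, c), (c, b)} := by
      have hsub := H.edges_sub _ he1
      have hb : b ∈ H.verts := hsub (by simp)
      have hc : c ∈ H.verts := hsub (by simp)
      ext ⟨x, y⟩
      simp only [Finset.mem_filter, Finset.mem_product, Finset.mem_insert, Finset.mem_singleton,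
        Prod.mk.injEq]
      constructor
      · rintro ⟨⟨-, h⟩, h'⟩
        obtain ⟨m1, m2, m3⟩ := triple_ne (H.edges_card _ h)
        have hx : x ∈ ({v, b, c} : Finset ℕ) := by rw [← h']; simp
        have hy : y ∈ ({v, b, c} : Finset ℕ) := by rw [← h']; simp
        simp only [Finset.mem_insert, Finset.mem_singleton] at hx hy
        grind
      · rintro (⟨rfl, rfl⟩ | ⟨rfl, rfl⟩)
        · exact ⟨⟨⟨hb, hc⟩, he1⟩, rfl⟩
        · have : ({v, x, y} : Finset ℕ) = {v, y, x} := by ext; simp; tauto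
          exact ⟨⟨⟨hc, hb⟩, by rwa [this]⟩, this⟩
    rw [this, Finset.card_pair]
    simp [n3]
  · intro q hq
    have := (Finset.mem_filter.1 hq).2
    simp only [Finset.coe_filter, Set.mem_ofPred_eq]
    exact ⟨this, by simp⟩

lemma L_eq_deg (H : HGraph 3) (v : H.verts) :
    (toTG H).L (fun _ => 1) v Finset.univ Finset.univ = 2 * (H.deg v.1 : ℝ) := by
  have := pair_count H v.1
  have e : (2 * (H.deg v.1 : ℝ)) = ((2 * H.deg v.1 : ℕ) : ℝ) := by push_cast; ring
  rw [e, ← this, Finset.card_filter, Finset.sum_product]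
  push_cast
  unfold TG.L TG.w
  rw [← Finset.sum_coe_sort H.verts]
  refine Finset.sum_congr rfl fun x _ => ?_
  rw [← Finset.sum_coe_sort H.verts]
  refine Finset.sum_congr rfl fun y _ => ?_
  simp only [toTG, mul_one, one_mul]
  split_ifs <;> simp_all

lemma sum_deg (H : HGraph 3) : ∑ v ∈ H.verts, H.deg v = 3 * H.edges.card := by
  unfold HGraph.deg
  have := Finset.sum_card_bipartiteAbove_eq_sum_card_bipartiteBelow (s := H.verts) (t := H.edges)
    (fun v e => v ∈ e)
  unfold Finset.bipartiteAbove Finset.bipartiteBelow at this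
  rw [this, Finset.sum_const_nat (m := 3), mul_comm]
  intro e he
  rw [Finset.filter_mem_eq_inter, Finset.inter_eq_right.2 (H.edges_sub e he), H.edges_card e he]

lemma W_eq_edges (H : HGraph 3) :
    (toTG H).W (fun _ => 1) Finset.univ Finset.univ Finset.univ = 6 * (H.edges.card : ℝ) := by
  unfold TG.W
  have h : ∑ v : H.verts, (1:ℝ) * (toTG H).L (fun _ => 1) v Finset.univ Finset.univ
      = ∑ v : H.verts, 2 * (H.deg v.1 : ℝ) :=
    Finset.sum_congr rfl fun v _ => by rw [L_eq_deg, one_mul]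
  rw [h, ← Finset.mul_sum, Finset.sum_coe_sort H.verts (fun v => (H.deg v : ℝ))]
  have := sum_deg H
  have h2 : (∑ v ∈ H.verts, (H.deg v : ℝ)) = 3 * (H.edges.card : ℝ) := by exact_mod_cast this
  rw [h2]; ring

/-- Deleting a vertex. -/
lemma deleteVert_verts (H : HGraph 3) (v : ℕ) : (H.deleteVert v).verts = H.verts.erase v := rfl

lemma deleteVert_edges (H : HGraph 3) (v : ℕ) :
    (H.deleteVert v).edges = H.edges.filter fun e => v ∉ e := by
  unfold HGraph.deleteVert HGraph.ofEdges
  ext e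
  simp only [Finset.mem_filter]
  constructor
  · rintro ⟨h, -⟩; exact h
  · intro h
    exact ⟨h, Finset.subset_erase.2 ⟨H.edges_sub e h.1, h.2⟩, H.edges_card e h.1⟩

lemma edges_eq_delete_add (H : HGraph 3) (v : ℕ) :
    H.edges.card = (H.deleteVert v).edges.card + H.deg v := by
  rw [deleteVert_edges, HGraph.deg, add_comm]
  exact (Finset.card_filter_add_card_filter_not (fun e => v ∈ e)).symm

lemma copy_mono {H H' : HGraph 3} (hv : H.verts ⊆ H'.verts) (he : H.edges ⊆ H'.edges)
    (h : F32.IsCopyIn H) : F32.IsCopyIn H' := by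
  obtain ⟨f, a, b, c⟩ := h
  exact ⟨f, a, fun v hv' => hv (b v hv'), fun e he' => he (c e he')⟩

lemma noCopy_delete {H : HGraph 3} (h : ¬ F32.IsCopyIn H) (v : ℕ) :
    ¬ F32.IsCopyIn (H.deleteVert v) := fun h' => h (copy_mono
      (Finset.erase_subset _ _) (by rw [deleteVert_edges]; exact Finset.filter_subset _ _) h')

lemma edges_le_choose (H : HGraph 3) : H.edges.card ≤ H.verts.card.choose 3 := by
  rw [← Finset.card_powersetCard]
  exact Finset.card_le_card fun e he => Finset.mem_powersetCard.2 ⟨H.edges_sub e he, H.edges_card e he⟩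

end PartH1

section PartH2
set_option linter.unusedSectionVars false
set_option linter.unusedVariables false
open HGraph

/-- Maximum size of a semibipartite 3-graph on `n` vertices. -/
def sN (n : ℕ) : ℕ := (Finset.range (n+1)).sup fun a => a * (n-a).choose 2

lemma le_sN {n a : ℕ} (h : a ≤ n) : a * (n-a).choose 2 ≤ sN n :=
  Finset.le_sup (f := fun a => a * (n-a).choose 2) (Finset.mem_range.2 (by omega))

lemma exists_sN (n : ℕ) : ∃ a ≤ n, sN n = a * (n-a).choose 2 := by
  obtain ⟨a, ha, h⟩ := Finset.exists_mem_eq_sup (Finset.range (n+1)) ⟨0, by simp⟩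
    (fun a => a * (n-a).choose 2)
  exact ⟨a, by simpa [Nat.lt_succ_iff] using ha, h⟩

lemma le_sN' {n a b : ℕ} (h : a + b = n) : a * b.choose 2 ≤ sN n := by
  have := le_sN (n := n) (a := a) (by omega)
  rwa [show n - a = b by omega] at this

lemma exists_sN' (n : ℕ) : ∃ a b, a + b = n ∧ sN n = a * b.choose 2 := by
  obtain ⟨a, ha, h⟩ := exists_sN n
  exact ⟨a, n - a, by omega, h⟩

lemma choose2_real (b : ℕ) : ((b.choose 2 : ℕ) : ℝ) = b * (b - 1) / 2 := Nat.cast_choose_two ℝ b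

lemma sN_lower (k : ℕ) : 2/27 * (k:ℝ)^3 - (k:ℝ)^2 ≤ sN k := by
  have h := le_sN (n := k) (a := k/3) (by omega)
  have h' : ((k/3 : ℕ) : ℝ) * (((k - k/3 : ℕ).choose 2 : ℕ) : ℝ) ≤ sN k := by exact_mod_cast h
  rw [choose2_real] at h'
  have h1 : (k : ℝ) ≤ 3 * ((k/3 : ℕ) : ℝ) + 2 := by exact_mod_cast (by omega : k ≤ 3 * (k/3) + 2)
  have h2 : 2 * (k : ℝ) ≤ 3 * ((k - k/3 : ℕ) : ℝ) := by
    exact_mod_cast (by omega : 2 * k ≤ 3 * (k - k/3))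
  set a : ℝ := ((k/3 : ℕ) : ℝ)
  set b : ℝ := ((k - k/3 : ℕ) : ℝ)
  have hs : (0:ℝ) ≤ sN k := Nat.cast_nonneg _
  have hk : (0:ℝ) ≤ k := Nat.cast_nonneg _
  by_cases hk2 : (k:ℝ) ≤ 13
  · nlinarith [sq_nonneg (k:ℝ)]
  · push Not at hk2
    have c1 : ((k:ℝ)-2)/3 ≤ a := by linarith
    have c2 : (2*(k:ℝ)/3) ≤ b := by linarith
    have c3 : (2*(k:ℝ)/3) * (2*(k:ℝ)/3 - 1) ≤ b * (b-1) :=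
      mul_le_mul c2 (by linarith) (by linarith) (by linarith)
    have c4 : ((k:ℝ)-2)/3 * ((2*(k:ℝ)/3) * (2*(k:ℝ)/3 - 1)) ≤ a * (b * (b-1)) :=
      mul_le_mul c1 c3 (mul_nonneg (by linarith) (by linarith)) (by linarith)
    nlinarith

lemma sN_growth (k : ℕ) : 3 * sN k ≤ k * (sN (k+1) - sN k) ∧ sN k ≤ sN (k+1) := by
  obtain ⟨a, b, hab, hs⟩ := exists_sN' k
  have h1 : (a+1) * b.choose 2 ≤ sN (k+1) := le_sN' (by omega)
  have h2 : a * (b+1).choose 2 ≤ sN (k+1) := le_sN' (by omega)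
  have h3 : (b+1).choose 2 = b.choose 2 + b := by
    rw [Nat.choose_succ_succ' b 1, Nat.choose_one_right, add_comm]
  have h4 : b * (b - 1) = 2 * b.choose 2 := by
    rw [Nat.choose_two_right, Nat.mul_div_cancel' (Nat.even_mul_pred_self b).two_dvd]
  have hle : sN k ≤ sN (k+1) := by rw [hs]; nlinarith
  refine ⟨?_, hle⟩
  obtain ⟨D, hD⟩ := Nat.exists_eq_add_of_le hle
  rw [hD, Nat.add_sub_cancel_left]
  have d1 : b.choose 2 ≤ D := by nlinarith
  have d2 : a * b ≤ D := by rw [h3] at h2; nlinarith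
  have d3 : 2 * (a * b.choose 2) ≤ b * D := by
    calc 2 * (a * b.choose 2) = a * (b * (b-1)) := by rw [h4]; ring
      _ ≤ a * (b * b) := Nat.mul_le_mul_left _ (Nat.mul_le_mul_left _ (Nat.sub_le _ _))
      _ = b * (a * b) := by ring
      _ ≤ b * D := Nat.mul_le_mul_left _ d2
  have d4 : a * b.choose 2 ≤ a * D := Nat.mul_le_mul_left _ d1
  rw [hs, ← hab]; nlinarith

lemma sN_step (k : ℕ) : (sN k : ℝ) + 2/9 * (k:ℝ)^2 - 3 * k ≤ sN (k+1) := by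
  obtain ⟨h1, h2⟩ := sN_growth k
  rcases Nat.eq_zero_or_pos k with rfl | hk
  · have : (sN 0 : ℝ) ≤ sN 1 := by exact_mod_cast h2
    simpa using this
  · have hk' : (0:ℝ) < k := by exact_mod_cast hk
    have h3 : 3 * (sN k : ℝ) ≤ k * ((sN (k+1) : ℝ) - sN k) := by
      rw [← Nat.cast_sub h2]; exact_mod_cast h1
    have h4 := sN_lower k
    have h5 : (k:ℝ) * (2/9 * (k:ℝ)^2 - 3 * k) ≤ k * ((sN (k+1) : ℝ) - sN k) := by nlinarith
    have := le_of_mul_le_mul_left h5 hk'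
    linarith

/-- Either there is a vertex of small degree or theorem D applies. -/
lemma stepD {H : HGraph 3} (hF : ¬ F32.IsCopyIn H) (hn : 100 ≤ H.verts.card)
    (hd : ∀ v ∈ H.verts, (4/9 - 1/10^32) * (H.verts.card : ℝ)^2 ≤ 2 * (H.deg v : ℝ)) :
    H.edges.card ≤ sN H.verts.card ∧ (H.edges.card = sN H.verts.card → Semibipartite 3 H) := by
  classical
  have hcard : ((H.verts.card : ℕ) : ℝ) = (Fintype.card H.verts : ℕ) := by
    rw [Fintype.card_coe]
  obtain ⟨R, h1, h2⟩ := TG.theoremD (T := toTG H) (toTG_free hF) hcard (by exact_mod_cast hn)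
    (fun v => by rw [L_eq_deg]; exact hd v.1 v.2)
  rw [W_eq_edges] at h1 h2
  have hRR : R.card + Rᶜ.card = H.verts.card := by
    rw [Finset.card_add_card_compl, Fintype.card_coe]
  have hs : R.card * (Rᶜ.card).choose 2 ≤ sN H.verts.card := le_sN' hRR
  have hs' : (R.card : ℝ) * (Rᶜ.card * ((Rᶜ.card : ℝ) - 1)) ≤ 2 * (sN H.verts.card : ℝ) := by
    have : (R.card : ℝ) * (((Rᶜ.card).choose 2 : ℕ) : ℝ) ≤ sN H.verts.card := by exact_mod_cast hs
    rw [choose2_real] at this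
    linarith
  have hle : (H.edges.card : ℝ) ≤ sN H.verts.card := by linarith
  refine ⟨by exact_mod_cast hle, fun heq => ?_⟩
  have heq' : (H.edges.card : ℝ) = sN H.verts.card := by exact_mod_cast heq
  obtain ⟨a1, a2⟩ := h2 (by linarith)
  refine ⟨R.map (Function.Embedding.subtype _), ?_, ?_⟩
  · intro x hx
    obtain ⟨y, -, rfl⟩ := Finset.mem_map.1 hx
    exact y.2
  · intro e he
    obtain ⟨x, y, z, n1, n2, n3, rfl⟩ := Finset.card_eq_three.1 (H.edges_card e he)
    have hsub := H.edges_sub _ he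
    have hx : x ∈ H.verts := hsub (by simp)
    have hy : y ∈ H.verts := hsub (by simp)
    have hz : z ∈ H.verts := hsub (by simp)
    have hE : (toTG H).E ⟨x, hx⟩ ⟨y, hy⟩ ⟨z, hz⟩ := he
    have b1 : ¬ ((⟨x, hx⟩ : H.verts) ∈ R ∧ (⟨y, hy⟩ : H.verts) ∈ R) := fun h => a1 _ h.1 _ h.2 _ hE
    have b2 : ¬ ((⟨x, hx⟩ : H.verts) ∈ R ∧ (⟨z, hz⟩ : H.verts) ∈ R) := fun h =>
      a1 _ h.1 _ h.2 _ ((toTG H).s23 hE)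
    have b3 : ¬ ((⟨y, hy⟩ : H.verts) ∈ R ∧ (⟨z, hz⟩ : H.verts) ∈ R) := fun h =>
      a1 _ h.1 _ h.2 _ ((toTG H).s23 ((toTG H).s12 hE))
    have b4 : ¬ ((⟨x, hx⟩ : H.verts) ∉ R ∧ (⟨y, hy⟩ : H.verts) ∉ R ∧ (⟨z, hz⟩ : H.verts) ∉ R) :=
      fun h => a2 _ h.1 _ h.2.1 _ h.2.2 hE
    have mem : ∀ u (hu : u ∈ H.verts), u ∈ R.map (Function.Embedding.subtype _) ↔
        (⟨u, hu⟩ : H.verts) ∈ R := by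
      intro u hu
      simp [hu]
    rw [← Finset.filter_mem_eq_inter, Finset.card_filter, Finset.sum_insert (by simp [n1, n2]),
      Finset.sum_insert (by simp [n3]), Finset.sum_singleton]
    simp only [mem x hx, mem y hy, mem z hz]
    split_ifs <;> simp_all

lemma turan_weak : ∃ N : ℕ, 100 ≤ N ∧ (∀ k, N ≤ k →
      (4/9 - 1/10^32) * ((k+1 : ℕ) : ℝ)^2 / 2 + 1 + sN k ≤ sN (k+1)) ∧
    ∀ k, N ≤ k → ∀ H : HGraph 3, H.verts.card = k → ¬ F32.IsCopyIn H →
      H.edges.card ≤ sN k + (N^3 - (k - N)) := by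
  have hN : ∃ N : ℕ, 100 ≤ N ∧ (∀ k, N ≤ k →
      (4/9 - 1/10^32) * ((k+1 : ℕ) : ℝ)^2 / 2 + 1 + sN k ≤ sN (k+1)) := by
    refine ⟨10^34, by norm_num, fun k hk => ?_⟩
    have := sN_step k
    have hk' : (10:ℝ)^34 ≤ k := by exact_mod_cast hk
    push_cast
    generalize (k:ℝ) = x at *
    norm_num at hk' ⊢
    nlinarith
  obtain ⟨N, h100, hN⟩ := hN
  refine ⟨N, h100, hN, ?_⟩
  intro k hk
  induction k, hk using Nat.le_induction with
  | base =>
    intro H hc hF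
    have h1 := edges_le_choose H
    rw [hc] at h1
    have h2 := Nat.choose_le_pow N 3
    simp only [Nat.sub_self, Nat.sub_zero]
    omega
  | succ k hk ih =>
    intro H hc hF
    by_cases hd : ∀ v ∈ H.verts, (4/9 - 1/10^32) * (H.verts.card : ℝ)^2 ≤ 2 * (H.deg v : ℝ)
    · have := (stepD hF (by omega) hd).1
      rw [hc] at this; omega
    · push Not at hd
      obtain ⟨v, hv, hd⟩ := hd
      have h1 := ih (H.deleteVert v) (by rw [deleteVert_verts, Finset.card_erase_of_mem hv, hc]; rfl)
        (noCopy_delete hF v)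
      have h2 := edges_eq_delete_add H v
      have h3 := hN k hk
      rw [hc] at hd
      have h4 : (H.deg v : ℝ) + 1 + sN k < sN (k+1) + 1 := by linarith
      have h5 : H.deg v + 1 + sN k < sN (k+1) + 1 := by exact_mod_cast h4
      omega

theorem turan : ∃ N : ℕ, ∀ H : HGraph 3, N ≤ H.verts.card → ¬ F32.IsCopyIn H →
    H.edges.card ≤ sN H.verts.card ∧ (H.edges.card = sN H.verts.card → Semibipartite 3 H) := by
  obtain ⟨N, h100, hN, hw⟩ := turan_weak
  refine ⟨N + N^3 + 1, fun H hk hF => ?_⟩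
  by_cases hd : ∀ v ∈ H.verts, (4/9 - 1/10^32) * (H.verts.card : ℝ)^2 ≤ 2 * (H.deg v : ℝ)
  · exact stepD hF (by omega) hd
  · push Not at hd
    obtain ⟨v, hv, hd⟩ := hd
    obtain ⟨k, hc⟩ : ∃ k, H.verts.card = k + 1 := ⟨H.verts.card - 1, by omega⟩
    have h1 := hw k (by omega) (H.deleteVert v)
      (by rw [deleteVert_verts, Finset.card_erase_of_mem hv, hc]; rfl) (noCopy_delete hF v)
    have h2 := edges_eq_delete_add H v
    have h3 := hN k (by omega)
    rw [hc] at hd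
    have h4 : (H.deg v : ℝ) + sN k < sN (k+1) := by linarith
    have h5 : H.deg v + sN k < sN (k+1) := by exact_mod_cast h4
    rw [hc]
    have h6 : N^3 - (k - N) = 0 := by omega
    constructor
    · omega
    · intro h; omega

end PartH2

section PartH3
set_option linter.unusedSectionVars false
set_option linter.unusedVariables false
open HGraph

lemma hg_ext {r : ℕ} {G H : HGraph r} (h1 : G.verts = H.verts) (h2 : G.edges = H.edges) : G = H := by
  cases G; cases H; simp_all

lemma F32_card : F32.verts.card = 5 := by rw [F32_verts]; rfl

lemma induce_verts (H : HGraph 3) (U : Finset ℕ) : (H.induce U).verts = H.verts ∩ U := rfl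

lemma mem_induce_edges {H : HGraph 3} {U e : Finset ℕ} :
    e ∈ (H.induce U).edges ↔ e ∈ H.edges ∧ e ⊆ U := by
  unfold HGraph.induce HGraph.ofEdges
  simp only [Finset.mem_filter]
  constructor
  · rintro ⟨h, -⟩; exact h
  · intro h
    exact ⟨h, Finset.subset_inter (H.edges_sub e h.1) h.2, H.edges_card e h.1⟩

lemma copy_set {H : HGraph 3} {U : Finset ℕ} (h : F32.IsCopyIn (H.induce U)) :
    ∃ A ⊆ H.verts ∩ U, A.card = 5 ∧ F32.IsCopyIn (H.induce A) := by
  obtain ⟨f, a, b, c⟩ := h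
  have hsub : F32.verts.image f ⊆ H.verts ∩ U := by
    intro x hx
    obtain ⟨y, hy, rfl⟩ := Finset.mem_image.1 hx
    exact b y hy
  refine ⟨F32.verts.image f, hsub, ?_, f, a, ?_, ?_⟩
  · rw [Finset.card_image_of_injOn a, F32_card]
  · intro v hv
    rw [induce_verts, Finset.mem_inter]
    exact ⟨(Finset.mem_inter.1 (b v hv)).1, Finset.mem_image_of_mem f hv⟩
  · intro e he
    rw [mem_induce_edges]
    exact ⟨(mem_induce_edges.1 (c e he)).1, Finset.image_subset_image (F32.edges_sub e he)⟩

lemma induce_copy_mono {H : HGraph 3} {U U' : Finset ℕ} (h : U ⊆ U')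
    (hc : F32.IsCopyIn (H.induce U)) : F32.IsCopyIn (H.induce U') :=
  copy_mono (Finset.inter_subset_inter_left h) (fun e he => by
    rw [mem_induce_edges] at he ⊢; exact ⟨he.1, he.2.trans h⟩) hc

lemma match_ext {H : HGraph 3} {k : ℕ} {S : Fin k → Finset ℕ}
    (h1 : ∀ i, S i ⊆ H.verts ∧ (S i).card = F32.verts.card)
    (h2 : ∀ i j, i ≠ j → Disjoint (S i) (S j)) (h3 : ∀ i, F32.IsCopyIn (H.induce (S i)))
    (h : F32.IsCopyIn (H.induce (H.verts \ Finset.univ.biUnion S))) : F32.HasMatching H (k+1) := by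
  obtain ⟨A, hA, hc, hcopy⟩ := copy_set h
  have hA1 : A ⊆ H.verts := hA.trans Finset.inter_subset_left
  have hdis : ∀ i, Disjoint A (S i) := by
    intro i
    rw [Finset.disjoint_left]
    intro x hx hxS
    have := (Finset.mem_sdiff.1 (Finset.mem_inter.1 (hA hx)).2).2
    exact this (Finset.mem_biUnion.2 ⟨i, Finset.mem_univ _, hxS⟩)
  refine ⟨Fin.cons A S, ?_, ?_, ?_⟩
  · intro i
    refine Fin.cases ?_ (fun i => ?_) i
    · simp only [Fin.cons_zero]; exact ⟨hA1, by rw [hc, F32_card]⟩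
    · simpa using h1 i
  · intro i j
    refine Fin.cases ?_ (fun i => ?_) i <;> refine Fin.cases ?_ (fun j => ?_) j
    · intro h; exact absurd rfl h
    · intro _; simpa using hdis j
    · intro _; simpa using (hdis i).symm
    · intro hij
      simpa using h2 i j (fun e => hij (by rw [e]))
  · intro i
    refine Fin.cases ?_ (fun i => ?_) i
    · simpa using hcopy
    · simpa using h3 i

lemma biUnion_card {H : HGraph 3} {k : ℕ} {S : Fin k → Finset ℕ}
    (h1 : ∀ i, S i ⊆ H.verts ∧ (S i).card = F32.verts.card) :
    (Finset.univ.biUnion S).card ≤ 5 * k := by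
  refine Finset.card_biUnion_le.trans ?_
  rw [Finset.sum_congr rfl fun i _ => (h1 i).2, F32_card]
  simp [mul_comm]

lemma cover_of_noMatching {H : HGraph 3} {t : ℕ} (h : ¬ F32.HasMatching H (t+1)) :
    ∃ B ⊆ H.verts, B.card ≤ 5 * t ∧ ¬ F32.IsCopyIn (H.induce (H.verts \ B)) := by
  by_contra hcon
  push Not at hcon
  have : ∀ k, k ≤ t + 1 → F32.HasMatching H k := by
    intro k
    induction k with
    | zero => intro _; exact ⟨fun _ => ∅, fun i => i.elim0, fun i => i.elim0, fun i => i.elim0⟩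
    | succ k ih =>
      intro hk
      obtain ⟨S, h1, h2, h3⟩ := ih (by omega)
      refine match_ext h1 h2 h3 (hcon _ (Finset.biUnion_subset.2 fun i _ => (h1 i).1) ?_)
      exact (biUnion_card h1).trans (by omega)
  exact h (this _ le_rfl)

/-- Edge counting under deletion of a set. -/
lemma edges_le_remove (H : HGraph 3) (B : Finset ℕ) :
    H.edges.card ≤ (H.induce (H.verts \ B)).edges.card + ∑ v ∈ B, H.deg v := by
  have : H.edges ⊆ (H.induce (H.verts \ B)).edges ∪ B.biUnion fun v => H.edges.filter fun e => v ∈ e := by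
    intro e he
    rw [Finset.mem_union, mem_induce_edges, Finset.mem_biUnion]
    by_cases h : ∃ v ∈ B, v ∈ e
    · obtain ⟨v, hv, hve⟩ := h
      exact Or.inr ⟨v, hv, Finset.mem_filter.2 ⟨he, hve⟩⟩
    · push Not at h
      refine Or.inl ⟨he, fun x hx => Finset.mem_sdiff.2 ⟨H.edges_sub e he hx, fun hB => h x hB hx⟩⟩
  refine (Finset.card_le_card this).trans ((Finset.card_union_le _ _).trans ?_)
  exact Nat.add_le_add_left Finset.card_biUnion_le _

lemma codeg_le (H : HGraph 3) {u v : ℕ} (huv : u ≠ v) :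
    (H.edges.filter fun e => v ∈ e ∧ u ∈ e).card ≤ H.verts.card := by
  have : (H.edges.filter fun e => v ∈ e ∧ u ∈ e) ⊆ H.verts.image fun x => {v, u, x} := by
    intro e he
    obtain ⟨he1, hv, hu⟩ := Finset.mem_filter.1 he
    obtain ⟨b, c, rfl, n1, n2, n3⟩ := edge_eq_of_mem he1 hv
    have hsub := H.edges_sub _ he1
    simp only [Finset.mem_insert, Finset.mem_singleton] at hu
    rw [Finset.mem_image]
    rcases hu with h | rfl | rfl
    · exact absurd h huv
    · exact ⟨c, hsub (by simp), rfl⟩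
    · exact ⟨b, hsub (by simp), by ext; simp; tauto⟩
  exact (Finset.card_le_card this).trans Finset.card_image_le

lemma deg_le_remove (H : HGraph 3) {B : Finset ℕ} {v : ℕ} (hv : v ∉ B) :
    H.deg v ≤ (H.induce (H.verts \ B)).deg v + B.card * H.verts.card := by
  have : (H.edges.filter fun e => v ∈ e) ⊆ ((H.induce (H.verts \ B)).edges.filter fun e => v ∈ e)
      ∪ B.biUnion fun u => H.edges.filter fun e => v ∈ e ∧ u ∈ e := by
    intro e he
    obtain ⟨he, hve⟩ := Finset.mem_filter.1 he
    rw [Finset.mem_union, Finset.mem_filter, mem_induce_edges, Finset.mem_biUnion]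
    by_cases h : ∃ v ∈ B, v ∈ e
    · obtain ⟨u, hu, hue⟩ := h
      exact Or.inr ⟨u, hu, Finset.mem_filter.2 ⟨he, hve, hue⟩⟩
    · push Not at h
      refine Or.inl ⟨⟨he, fun x hx => Finset.mem_sdiff.2 ⟨H.edges_sub e he hx, fun hB => h x hB hx⟩⟩, hve⟩
  refine (Finset.card_le_card this).trans ((Finset.card_union_le _ _).trans ?_)
  refine Nat.add_le_add_left (Finset.card_biUnion_le.trans ?_) _
  rw [← smul_eq_mul]
  refine Finset.sum_le_card_nsmul _ _ _ fun u hu => codeg_le H ?_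
  rintro rfl; exact hv hu

lemma star_card {U : Finset ℕ} {v : ℕ} (hv : v ∈ U) :
    ((Finset.powersetCard 3 U).filter fun e => v ∈ e).card = (U.card - 1).choose 2 := by
  have h1 := Finset.card_filter_add_card_filter_not (s := Finset.powersetCard 3 U) (fun e => v ∈ e)
  have h2 : ((Finset.powersetCard 3 U).filter fun e => v ∉ e) = Finset.powersetCard 3 (U.erase v) := by
    ext e
    simp only [Finset.mem_filter, Finset.mem_powersetCard, Finset.subset_erase]
    tauto
  rw [h2, Finset.card_powersetCard, Finset.card_powersetCard, Finset.card_erase_of_mem hv] at h1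
  obtain ⟨k, hk⟩ : ∃ k, U.card = k + 1 := ⟨U.card - 1, by
    have := Finset.card_pos.2 ⟨v, hv⟩; omega⟩
  rw [hk, show (k+1).choose 3 = k.choose 2 + k.choose 3 from Nat.choose_succ_succ' k 2] at h1
  rw [hk]
  simp only [Nat.add_sub_cancel] at h1 ⊢
  omega

lemma star_sub (H : HGraph 3) (v : ℕ) : (H.edges.filter fun e => v ∈ e) ⊆
    (Finset.powersetCard 3 H.verts).filter fun e => v ∈ e := by
  intro e he
  obtain ⟨h1, h2⟩ := Finset.mem_filter.1 he
  exact Finset.mem_filter.2 ⟨Finset.mem_powersetCard.2 ⟨H.edges_sub e h1, H.edges_card e h1⟩, h2⟩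

lemma deg_le_star (H : HGraph 3) {v : ℕ} (hv : v ∈ H.verts) :
    H.deg v ≤ (H.verts.card - 1).choose 2 := by
  rw [← star_card hv]
  exact Finset.card_le_card (star_sub H v)

lemma free_bigdeg {H : HGraph 3} (hF : ¬ F32.IsCopyIn H) {v : ℕ} (hv : v ∈ H.verts) {n : ℝ}
    (hn : (H.verts.card : ℝ) ≤ n) :
    6 * (H.edges.card : ℝ) + 6/10 * n * (H.deg v : ℝ) ≤ 592/1000 * n^3 := by
  classical
  have hn0 : (0:ℝ) ≤ n := (Nat.cast_nonneg _).trans hn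
  have h1 := TG.W_perturb (T := toTG H) (p := fun _ => (1:ℝ)) (fun _ => zero_le_one) ⟨v, hv⟩
    (θ := n/10) (by positivity)
  have h2 := TG.theoremE (T := toTG H) (toTG_free hF)
    (p := fun u => (1:ℝ) + n/10 * (if u = (⟨v, hv⟩ : H.verts) then 1 else 0)) (fun u => by
      split_ifs <;> simp <;> positivity)
  rw [TG.sum_perturb] at h2
  rw [W_eq_edges, L_eq_deg] at h1
  have h3 : ∑ u : H.verts, (1:ℝ) = H.verts.card := by simp
  rw [h3] at h2
  have h4 : ((H.verts.card : ℝ) + n/10)^3 ≤ (n + n/10)^3 :=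
    pow_le_pow_left₀ (by positivity) (by linarith) 3
  have h5 : 0 ≤ n^3 := by positivity
  have := h1.trans h2
  nlinarith

end PartH3

section PartH4
set_option linter.unusedSectionVars false
set_option linter.unusedVariables false
open HGraph

/-- Size of the extremal graph. -/
def gN (m : ℕ) : ℕ → ℕ
  | 0 => sN m
  | t+1 => gN m t + (m+t).choose 2

/-- Structure of the extremal graph. -/
def Struct (H : HGraph 3) (m t : ℕ) : Prop :=
  ∃ L ⊆ H.verts, L.card = t ∧
    (∀ e ∈ Finset.powersetCard 3 H.verts, (e ∩ L).Nonempty → e ∈ H.edges) ∧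
    Semibipartite 3 (H.induce (H.verts \ L)) ∧ (H.induce (H.verts \ L)).edges.card = sN m

lemma gN_lower (m t : ℕ) : sN m + t * m.choose 2 ≤ gN m t := by
  induction t with
  | zero => simp [gN]
  | succ t ih =>
    have : m.choose 2 ≤ (m+t).choose 2 := Nat.choose_le_choose 2 (by omega)
    simp only [gN]
    nlinarith

lemma gN_choose (m t : ℕ) : gN m t + m.choose 3 = sN m + (m+t).choose 3 := by
  induction t with
  | zero => simp [gN]
  | succ t ih =>
    have : (m+(t+1)).choose 3 = (m+t).choose 2 + (m+t).choose 3 := Nat.choose_succ_succ' (m+t) 2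
    simp only [gN]
    omega

lemma sN_iter (k j : ℕ) : (sN k : ℝ) + j * (2/9 * (k:ℝ)^2 - 3 * (k+j)) ≤ sN (k+j) := by
  induction j with
  | zero => simp
  | succ j ih =>
    have h := sN_step (k+j)
    rw [← Nat.add_assoc]
    push_cast at h ih ⊢
    have hk : (0:ℝ) ≤ k := Nat.cast_nonneg k
    have hj : (0:ℝ) ≤ j := Nat.cast_nonneg j
    nlinarith [mul_nonneg hk hj]

lemma num_big {m T n E b E' d d' : ℝ} (hm : 10^5 ≤ m) (hT : 10^5 * T ≤ m) (hT0 : 0 ≤ T)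
    (hn : n = m + T) (hE : 2/27 * m^3 - m^2 ≤ E) (hb : b ≤ 5 * T)
    (hE' : E ≤ E' + b * n^2) (hd : 26/100 * n^2 ≤ d) (hd' : d ≤ d' + b * n)
    (hf : 6 * E' + 6/10 * n * d' ≤ 592/1000 * n^3) : False := by
  have hn0 : 0 < n := by linarith
  have hm1 : (1 - 1/10^5) * n ≤ m := by rw [hn]; linarith
  have hm0 : 0 < m := by linarith
  have e1 : ((1 - 1/10^5) * n)^3 ≤ m^3 := pow_le_pow_left₀ (by norm_num; positivity) hm1 3
  have e2 : m^2 ≤ n^2 := pow_le_pow_left₀ hm0.le (by linarith) 2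
  have e3 : b ≤ 5/10^5 * n := by linarith
  have e4 : b * n^2 ≤ 5/10^5 * n * n^2 := mul_le_mul_of_nonneg_right e3 (by positivity)
  have e5 : n^2 ≤ 1/10^5 * n * n^2 := by
    have : (1:ℝ) ≤ 1/10^5 * n := by linarith
    nlinarith [sq_nonneg n]
  have e6 : n * d ≤ n * d' + b * n^2 := by nlinarith
  have e7 : n * (26/100 * n^2) ≤ n * d := mul_le_mul_of_nonneg_left hd hn0.le
  have e8 : 0 < n^3 := by positivity
  nlinarith

lemma num_small {k m T n s0 s1 E : ℝ} (hm : 10^5 ≤ m) (hT : 10^5 * T ≤ m) (hT0 : 1 ≤ T)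
    (hn : n = m + T) (hk : m = k + 4 * T)
    (h1 : s0 + 4 * T * (2/9 * k^2 - 3 * m) ≤ s1) (h2 : s1 + T * (m * (m-1)/2) ≤ E)
    (h3 : E ≤ s0 + 5 * T * (26/100 * n^2)) : False := by
  have hm0 : 0 < m := by linarith
  have a1 : (1 - 4/10^5) * m ≤ k := by linarith
  have a2 : ((1 - 4/10^5) * m)^2 ≤ k^2 := pow_le_pow_left₀ (by norm_num; positivity) a1 2
  have a3 : n^2 ≤ ((1+1/10^5) * m)^2 := pow_le_pow_left₀ (by linarith) (by linarith) 2
  have a4 : m ≤ 1/10^5 * m^2 := by nlinarith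
  have a5 : 0 < 4 * (2/9 * k^2 - 3 * m) + m * (m-1)/2 - 5 * (26/100 * n^2) := by
    have : 0 < m^2 := by positivity
    nlinarith
  nlinarith

lemma matching_of_delete {H : HGraph 3} {v t : ℕ} (hv : v ∈ H.verts)
    (h : F32.HasMatching (H.deleteVert v) t) :
    ∃ S : Fin t → Finset ℕ, (∀ i, S i ⊆ H.verts ∧ (S i).card = F32.verts.card) ∧
      (∀ i j, i ≠ j → Disjoint (S i) (S j)) ∧ (∀ i, F32.IsCopyIn (H.induce (S i))) ∧
      v ∉ Finset.univ.biUnion S := by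
  obtain ⟨S, h1, h2, h3⟩ := h
  refine ⟨S, fun i => ⟨(h1 i).1.trans (Finset.erase_subset _ _), (h1 i).2⟩, h2, fun i => ?_, ?_⟩
  · refine copy_mono ?_ ?_ (h3 i)
    · exact Finset.inter_subset_inter_right (Finset.erase_subset _ _)
    · intro e he
      rw [mem_induce_edges] at he ⊢
      rw [deleteVert_edges] at he
      exact ⟨(Finset.mem_filter.1 he.1).1, he.2⟩
  · intro hmem
    obtain ⟨i, -, hi⟩ := Finset.mem_biUnion.1 hmem
    exact Finset.notMem_erase v _ ((h1 i).1 hi)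

lemma struct_step {H : HGraph 3} {v m t : ℕ} (hv : v ∈ H.verts)
    (hdeg : H.deg v = (H.verts.card - 1).choose 2) (h : Struct (H.deleteVert v) m t) :
    Struct H m (t+1) := by
  have hstar : (H.edges.filter fun e => v ∈ e) = (Finset.powersetCard 3 H.verts).filter fun e => v ∈ e := by
    refine Finset.eq_of_subset_of_card_le (star_sub H v) ?_
    rw [star_card hv, ← hdeg]; rfl
  obtain ⟨L, hL, hc, hall, hs, hsn⟩ := h
  rw [deleteVert_verts] at hL hall
  have hvL : v ∉ L := fun h => Finset.notMem_erase v _ (hL h)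
  have hind : (H.deleteVert v).induce ((H.deleteVert v).verts \ L) = H.induce (H.verts \ insert v L) := by
    apply hg_ext
    · rw [induce_verts, induce_verts, deleteVert_verts]
      ext x; simp only [Finset.mem_inter, Finset.mem_sdiff, Finset.mem_erase, Finset.mem_insert]; tauto
    · ext e
      rw [mem_induce_edges, mem_induce_edges, deleteVert_edges, deleteVert_verts]
      simp only [Finset.mem_filter, Finset.subset_iff, Finset.mem_sdiff, Finset.mem_erase, Finset.mem_insert]
      constructor
      · rintro ⟨⟨a, b⟩, c⟩
        exact ⟨a, fun x hx => by have := c hx; tauto⟩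
      · rintro ⟨a, c⟩
        exact ⟨⟨a, fun hv' => (c hv').2 (Or.inl rfl)⟩, fun x hx => by have := c hx; tauto⟩
  refine ⟨insert v L, Finset.insert_subset hv (hL.trans (Finset.erase_subset _ _)),
    by rw [Finset.card_insert_of_notMem hvL, hc], ?_, hind ▸ hs, hind ▸ hsn⟩
  intro e he hne
  by_cases hve : v ∈ e
  · have : e ∈ H.edges.filter fun e => v ∈ e := by
      rw [hstar]; exact Finset.mem_filter.2 ⟨he, hve⟩
    exact (Finset.mem_filter.1 this).1
  · have h1 := hall e (by
      rw [Finset.mem_powersetCard] at he ⊢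
      exact ⟨Finset.subset_erase.2 ⟨he.1, hve⟩, he.2⟩) (by
      obtain ⟨x, hx⟩ := hne
      rw [Finset.mem_inter, Finset.mem_insert] at hx
      refine ⟨x, Finset.mem_inter.2 ⟨hx.1, hx.2.resolve_left ?_⟩⟩
      rintro rfl; exact hve hx.1)
    rw [deleteVert_edges] at h1
    exact (Finset.mem_filter.1 h1).1

lemma induce_self (H : HGraph 3) : H.induce (H.verts \ ∅) = H := by
  apply hg_ext
  · rw [induce_verts]; simp
  · ext e
    rw [mem_induce_edges]
    simp only [Finset.sdiff_empty]
    exact ⟨fun h => h.1, fun h => ⟨h, H.edges_sub e h⟩⟩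

theorem mainInd : ∃ N : ℕ, 10^5 ≤ N ∧ ∀ t m : ℕ, N ≤ m → 10^5 * t ≤ m → ∀ H : HGraph 3,
    H.verts.card = m + t → ¬ F32.HasMatching H (t+1) →
    H.edges.card ≤ gN m t ∧ (H.edges.card = gN m t → Struct H m t) := by
  obtain ⟨N, hN⟩ := turan
  refine ⟨2*N + 10^5, by omega, ?_⟩
  intro t
  induction t with
  | zero =>
    intro m hm ht H hH hM
    obtain ⟨B, hB, hBc, hc⟩ := cover_of_noMatching hM
    have : B = ∅ := Finset.card_eq_zero.1 (by omega)
    subst this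
    rw [induce_self] at hc
    have h := hN H (by omega) hc
    rw [hH] at h
    simp only [Nat.add_zero] at h
    refine ⟨h.1, fun he => ⟨∅, by simp, rfl, ?_, ?_, ?_⟩⟩
    · intro e _ hne; simp at hne
    · rw [induce_self]; exact h.2 he
    · rw [induce_self]; exact he
  | succ t ih =>
    intro m hm ht H hH hM
    by_cases hsmall : H.edges.card < gN m (t+1)
    · exact ⟨hsmall.le, fun h => absurd h hsmall.ne⟩
    push Not at hsmall
    have hm5 : (10^5 : ℝ) ≤ m := by exact_mod_cast (show 10^5 ≤ m by omega)
    have hT5 : (10^5 : ℝ) * ((t:ℝ)+1) ≤ m := by exact_mod_cast ht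
    have hT1 : (1:ℝ) ≤ (t:ℝ)+1 := by have := Nat.cast_nonneg (α := ℝ) t; linarith
    have hn : (H.verts.card : ℝ) = m + ((t:ℝ)+1) := by rw [hH]; push_cast; ring
    have hgl := (gN_lower m (t+1)).trans hsmall
    by_cases hd : ∃ v ∈ H.verts, 26/100 * (H.verts.card : ℝ)^2 ≤ H.deg v
    · obtain ⟨v, hv, hdv⟩ := hd
      have hM' : ¬ F32.HasMatching (H.deleteVert v) (t+1) := by
        intro hmat
        obtain ⟨S, h1, h2, h3, h4⟩ := matching_of_delete hv hmat
        set B := Finset.univ.biUnion S with hB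
        have hBc : B.card ≤ 5 * (t+1) := biUnion_card h1
        have hBv : B ⊆ H.verts := Finset.biUnion_subset.2 fun i _ => (h1 i).1
        have hfree : ¬ F32.IsCopyIn (H.induce (H.verts \ B)) := fun hc => hM (match_ext h1 h2 h3 hc)
        have hvi : v ∈ (H.induce (H.verts \ B)).verts := by
          rw [induce_verts]; simp [hv, h4]
        have hf := free_bigdeg hfree hvi (n := H.verts.card) (by
          exact_mod_cast Finset.card_le_card (show (H.induce (H.verts \ B)).verts ⊆ H.verts from
            Finset.inter_subset_left))
        have hr : (H.edges.card : ℝ) ≤ (H.induce (H.verts \ B)).edges.card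
            + (B.card : ℝ) * (H.verts.card : ℝ)^2 := by
          have := edges_le_remove H B
          have h5 : ∑ u ∈ B, H.deg u ≤ B.card * (H.verts.card)^2 := by
            refine Finset.sum_le_card_nsmul _ _ _ fun u hu => ?_
            refine (deg_le_star H (hBv hu)).trans ((Nat.choose_le_pow _ _).trans ?_)
            exact Nat.pow_le_pow_left (by omega) 2
          exact_mod_cast this.trans (Nat.add_le_add_left h5 _)
        have hr2 : (H.deg v : ℝ) ≤ (H.induce (H.verts \ B)).deg v + (B.card : ℝ) * H.verts.card := by
          exact_mod_cast deg_le_remove H h4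
        refine num_big hm5 hT5 (by linarith) hn (E := H.edges.card) ?_ (b := B.card) ?_ hr hdv hr2 hf
        · refine (sN_lower m).trans ?_
          exact_mod_cast (Nat.le_add_right _ _).trans hgl
        · exact_mod_cast hBc
      have hcd : (H.deleteVert v).verts.card = m + t := by
        rw [deleteVert_verts, Finset.card_erase_of_mem hv, hH]; rfl
      obtain ⟨i1, i2⟩ := ih m hm (by omega) _ hcd hM'
      have e1 := edges_eq_delete_add H v
      have e2 := deg_le_star H hv
      have e3 : H.verts.card - 1 = m + t := by omega
      rw [e3] at e2
      simp only [gN] at hsmall ⊢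
      refine ⟨by omega, fun he => struct_step hv (by rw [e3]; omega) (i2 (by omega))⟩
    · exfalso
      push Not at hd
      obtain ⟨B, hB, hBc, hc⟩ := cover_of_noMatching hM
      obtain ⟨B', hBB', hB', hBc'⟩ := Finset.exists_subsuperset_card_eq hB hBc (by omega)
      have hfree : ¬ F32.IsCopyIn (H.induce (H.verts \ B')) := fun h =>
        hc (induce_copy_mono (Finset.sdiff_subset_sdiff le_rfl hBB') h)
      have hvc : (H.induce (H.verts \ B')).verts.card = m - 4 * (t+1) := by
        rw [induce_verts, Finset.inter_eq_right.2 Finset.sdiff_subset, Finset.card_sdiff_of_subset hB',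
          hH, hBc']; omega
      have htu := (hN _ (by rw [hvc]; omega) hfree).1
      rw [hvc] at htu
      obtain ⟨k, hk⟩ : ∃ k, m = k + 4 * (t+1) := ⟨m - 4 * (t+1), by omega⟩
      have hk' : m - 4 * (t+1) = k := by omega
      rw [hk'] at htu
      have hit := sN_iter k (4 * (t+1))
      rw [← hk] at hit
      have hkr : (m:ℝ) = k + 4 * ((t:ℝ)+1) := by rw [hk]; push_cast; ring
      have hr : (H.edges.card : ℝ) ≤ sN k + 5 * ((t:ℝ)+1) * (26/100 * (H.verts.card : ℝ)^2) := by
        have h1 : (H.edges.card : ℝ) ≤ (H.induce (H.verts \ B')).edges.card + ∑ v ∈ B', (H.deg v : ℝ) := by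
          exact_mod_cast edges_le_remove H B'
        have h2 : ∑ v ∈ B', (H.deg v : ℝ) ≤ B'.card • (26/100 * (H.verts.card : ℝ)^2) :=
          Finset.sum_le_card_nsmul _ _ _ fun u hu => (hd u (hB' hu)).le
        rw [hBc', nsmul_eq_mul] at h2
        have h3 : ((H.induce (H.verts \ B')).edges.card : ℝ) ≤ sN k := by exact_mod_cast htu
        push_cast at h2
        linarith
      refine num_small hm5 hT5 hT1 hn hkr (s0 := sN k) (s1 := sN m) ?_ (E := H.edges.card) ?_ hr
      · push_cast at hit
        rw [hkr]
        exact hit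
      · have : ((sN m + (t+1) * m.choose 2 : ℕ) : ℝ) ≤ H.edges.card := by exact_mod_cast hgl
        rw [← choose2_real]
        push_cast at this
        exact this

end PartH4

section PartH5
set_option linter.unusedSectionVars false
set_option linter.unusedVariables false
open HGraph

lemma semibip_le {G : HGraph 3} (h : Semibipartite 3 G) : G.edges.card ≤ sN G.verts.card := by
  obtain ⟨V, hV, hE⟩ := h
  have h1 : G.edges.card ≤ (Finset.powersetCard 1 V ×ˢ Finset.powersetCard 2 (G.verts \ V)).card := by
    refine Finset.card_le_card_of_injOn (fun e => (e ∩ V, e \ V)) ?_ ?_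
    · intro e he
      have he : e ∈ G.edges := he
      have hc := G.edges_card e he
      have h2 := hE e he
      have h3 := Finset.card_inter_add_card_sdiff e V
      simp only [Finset.coe_product, Set.mem_prod, Finset.mem_coe, Finset.mem_powersetCard]
      exact ⟨⟨Finset.inter_subset_right, h2⟩,
        Finset.sdiff_subset_sdiff (G.edges_sub e he) le_rfl, by omega⟩
    · intro e _ e' _ hee
      simp only [Prod.mk.injEq] at hee
      have a := Finset.sdiff_union_inter e V
      have b := Finset.sdiff_union_inter e' V
      rw [← a, ← b, hee.1, hee.2]
  rw [Finset.card_product, Finset.card_powersetCard, Finset.card_powersetCard, Nat.choose_one_right] at h1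
  refine h1.trans (le_sN' ?_)
  have := Finset.card_sdiff_add_card_eq_card hV
  omega

lemma semibip_exists (m t : ℕ) : ∃ G : HGraph 3, G.verts.card = m ∧ Disjoint G.verts (Finset.range t) ∧
    Semibipartite 3 G ∧ G.edges.card = sN m := by
  obtain ⟨a, b, hab, hs⟩ := exists_sN' m
  set A := Finset.Ico t (t+a) with hA
  set B := Finset.Ico (t+a) (t+a+b) with hB
  have hAc : A.card = a := by simp [hA]
  have hBc : B.card = b := by simp [hB]
  have hdis : Disjoint A B := by
    rw [Finset.disjoint_left]; intro x; simp only [hA, hB, Finset.mem_Ico]; omega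
  let G : HGraph 3 := ofEdges 3 (A ∪ B) ((Finset.powersetCard 3 (A ∪ B)).filter fun e => (e ∩ A).card = 1)
  have hGv : G.verts = A ∪ B := rfl
  have hGe : ∀ e, e ∈ G.edges ↔ (e ⊆ A ∪ B ∧ e.card = 3) ∧ (e ∩ A).card = 1 := by
    intro e
    simp only [G, ofEdges, Finset.mem_filter, Finset.mem_powersetCard]
    tauto
  have hcard : G.verts.card = m := by rw [hGv, Finset.card_union_of_disjoint hdis, hAc, hBc, hab]
  have hsb : Semibipartite 3 G := ⟨A, Finset.subset_union_left, fun e he => ((hGe e).1 he).2⟩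
  refine ⟨G, hcard, ?_, hsb, le_antisymm (by rw [← hcard]; exact semibip_le hsb) ?_⟩
  · rw [hGv, Finset.disjoint_left]; intro x
    simp only [hA, hB, Finset.mem_union, Finset.mem_Ico, Finset.mem_range]; omega
  · have h1 : (A ×ˢ Finset.powersetCard 2 B).card ≤ G.edges.card := by
      have key : ∀ x ∈ A, ∀ p ⊆ B, x ∉ p ∧ insert x p ∩ A = {x} ∧ insert x p \ A = p := by
        intro x hx p hp
        have hpA : ∀ y ∈ p, y ∉ A := fun y hy hyA => Finset.disjoint_left.1 hdis hyA (hp hy)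
        refine ⟨fun h => hpA x h hx, ?_, ?_⟩
        · ext y; simp only [Finset.mem_inter, Finset.mem_insert, Finset.mem_singleton]
          constructor
          · rintro ⟨h | h, h'⟩
            · exact h
            · exact absurd h' (hpA y h)
          · rintro rfl; exact ⟨Or.inl rfl, hx⟩
        · ext y; simp only [Finset.mem_sdiff, Finset.mem_insert]
          constructor
          · rintro ⟨rfl | h, h'⟩
            · exact absurd hx h'
            · exact h
          · intro h; exact ⟨Or.inr h, hpA y h⟩
      refine Finset.card_le_card_of_injOn (fun q => insert q.1 q.2) ?_ ?_
      · rintro ⟨x, p⟩ hq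
        simp only [Finset.coe_product, Set.mem_prod, Finset.mem_coe, Finset.mem_powersetCard] at hq
        obtain ⟨hx, hp, hpc⟩ := hq
        obtain ⟨k1, k2, k3⟩ := key x hx p hp
        rw [Finset.mem_coe, hGe]
        refine ⟨⟨Finset.insert_subset (Finset.mem_union_left _ hx) (hp.trans Finset.subset_union_right), ?_⟩, ?_⟩
        · simp only; rw [Finset.card_insert_of_notMem k1, hpc]
        · simp only; rw [k2, Finset.card_singleton]
      · rintro ⟨x, p⟩ hq ⟨x', p'⟩ hq' hee
        simp only [Finset.coe_product, Set.mem_prod, Finset.mem_coe, Finset.mem_powersetCard] at hq hq' hee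
        obtain ⟨k1, k2, k3⟩ := key x hq.1 p hq.2.1
        obtain ⟨k1', k2', k3'⟩ := key x' hq'.1 p' hq'.2.1
        rw [hee] at k2 k3
        rw [k2] at k2'
        rw [k3] at k3'
        rw [Finset.singleton_inj.1 k2', k3']
    rwa [Finset.card_product, Finset.card_powersetCard, hAc, hBc, ← hs] at h1

section J
variable {G : HGraph 3} {t : ℕ}

lemma J_verts : ((completeOn 3 (Finset.range t)).join G).verts = Finset.range t ∪ G.verts := rfl

lemma mem_J (hdis : Disjoint G.verts (Finset.range t)) {e : Finset ℕ} :
    e ∈ ((completeOn 3 (Finset.range t)).join G).edges ↔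
      (e ⊆ Finset.range t ∪ G.verts ∧ e.card = 3) ∧ ((e ∩ Finset.range t).Nonempty ∨ e ∈ G.edges) := by
  have h : e ∈ ((completeOn 3 (Finset.range t)).join G).edges ↔
      ((((e ⊆ Finset.range t ∧ e.card = 3) ∧ e ⊆ Finset.range t ∧ e.card = 3) ∨ e ∈ G.edges) ∨
        ((e ⊆ Finset.range t ∪ G.verts ∧ e.card = 3) ∧ (e ∩ Finset.range t).Nonempty ∧ (e ∩ G.verts).Nonempty))
      ∧ e ⊆ Finset.range t ∪ G.verts ∧ e.card = 3 := by
    simp only [HGraph.join, completeOn, ofEdges]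
    refine Finset.mem_filter.trans (and_congr_left fun _ => ?_)
    refine Finset.mem_union.trans (or_congr (Finset.mem_union.trans (or_congr
      (Finset.mem_filter.trans (and_congr Finset.mem_powersetCard Iff.rfl)) Iff.rfl))
      (Finset.mem_filter.trans (and_congr Finset.mem_powersetCard Iff.rfl)))
  rw [h]
  constructor
  · rintro ⟨(⟨⟨h1, h2⟩, -⟩ | h1) | h1, h3⟩
    · refine ⟨h3, Or.inl ?_⟩
      rw [Finset.inter_eq_left.2 h1]
      exact Finset.card_pos.1 (by omega)
    · exact ⟨h3, Or.inr h1⟩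
    · exact ⟨h3, Or.inl h1.2.1⟩
  · rintro ⟨h3, h1 | h1⟩
    · refine ⟨?_, h3⟩
      by_cases h4 : (e ∩ G.verts).Nonempty
      · exact Or.inr ⟨h3, h1, h4⟩
      · have h5 : e ⊆ Finset.range t := by
          intro x hx
          rcases Finset.mem_union.1 (h3.1 hx) with h | h
          · exact h
          · exact absurd ⟨x, Finset.mem_inter.2 ⟨hx, h⟩⟩ h4
        exact Or.inl (Or.inl ⟨⟨h5, h3.2⟩, h5, h3.2⟩)
    · exact ⟨Or.inl (Or.inr h1), h3⟩

lemma J_vcard (hdis : Disjoint G.verts (Finset.range t)) :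
    ((completeOn 3 (Finset.range t)).join G).verts.card = G.verts.card + t := by
  rw [J_verts, Finset.card_union_of_disjoint hdis.symm, Finset.card_range, add_comm]

lemma J_card (hdis : Disjoint G.verts (Finset.range t)) :
    ((completeOn 3 (Finset.range t)).join G).edges.card + G.verts.card.choose 3
      = G.edges.card + (G.verts.card + t).choose 3 := by
  set V := Finset.range t ∪ G.verts with hV
  have h1 := Finset.card_filter_add_card_filter_not (s := Finset.powersetCard 3 V)
    (fun e => (e ∩ Finset.range t).Nonempty)
  have h2 : ((Finset.powersetCard 3 V).filter fun e => ¬ (e ∩ Finset.range t).Nonempty)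
      = Finset.powersetCard 3 G.verts := by
    ext e
    simp only [Finset.mem_filter, Finset.mem_powersetCard, Finset.not_nonempty_iff_eq_empty]
    constructor
    · rintro ⟨⟨a, b⟩, c⟩
      refine ⟨fun x hx => ?_, b⟩
      rcases Finset.mem_union.1 (a hx) with h | h
      · exact absurd (Finset.mem_inter.2 ⟨hx, h⟩) (by rw [c]; simp)
      · exact h
    · rintro ⟨a, b⟩
      refine ⟨⟨a.trans Finset.subset_union_right, b⟩, ?_⟩
      exact Finset.disjoint_iff_inter_eq_empty.1 (Finset.disjoint_of_subset_left a hdis)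
  have h3 : ((completeOn 3 (Finset.range t)).join G).edges =
      ((Finset.powersetCard 3 V).filter fun e => (e ∩ Finset.range t).Nonempty) ∪ G.edges := by
    ext e
    rw [mem_J hdis, Finset.mem_union, Finset.mem_filter, Finset.mem_powersetCard]
    constructor
    · rintro ⟨a, b | b⟩
      · exact Or.inl ⟨a, b⟩
      · exact Or.inr b
    · rintro (⟨a, b⟩ | b)
      · exact ⟨a, Or.inl b⟩
      · exact ⟨⟨(G.edges_sub e b).trans Finset.subset_union_right, G.edges_card e b⟩, Or.inr b⟩
  have h4 : Disjoint ((Finset.powersetCard 3 V).filter fun e => (e ∩ Finset.range t).Nonempty) G.edges := by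
    rw [Finset.disjoint_left]
    intro e he he'
    obtain ⟨x, hx⟩ := (Finset.mem_filter.1 he).2
    rw [Finset.mem_inter] at hx
    exact Finset.disjoint_left.1 hdis (G.edges_sub e he' hx.1) hx.2
  have hVc : V.card = G.verts.card + t := by
    rw [hV, Finset.card_union_of_disjoint hdis.symm, Finset.card_range, add_comm t]
  rw [h2, Finset.card_powersetCard, Finset.card_powersetCard, hVc] at h1
  rw [h3, Finset.card_union_of_disjoint h4]
  omega

lemma J_noMatching (hdis : Disjoint G.verts (Finset.range t)) (hs : Semibipartite 3 G) :
    ¬ F32.HasMatching ((completeOn 3 (Finset.range t)).join G) (t+1) := by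
  rintro ⟨S, h1, h2, h3⟩
  have : ∃ i, ∀ x ∈ S i, x ∉ Finset.range t := by
    by_contra hcon
    push Not at hcon
    choose x hx hxt using hcon
    have hinj : Function.Injective (fun i => (⟨x i, Finset.mem_range.1 (hxt i)⟩ : Fin t)) := by
      intro i j hij
      by_contra hne
      have hij : x i = x j := by simpa using hij
      exact Finset.disjoint_left.1 (h2 i j hne) (hx i) (hij ▸ hx j)
    have := Fintype.card_le_of_injective _ hinj
    simp at this
  obtain ⟨i, hi⟩ := this
  refine semibip_noCopy hs (copy_mono ?_ ?_ (h3 i))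
  · intro x hx
    rw [induce_verts, J_verts, Finset.mem_inter, Finset.mem_union] at hx
    exact hx.1.resolve_left (hi x hx.2)
  · intro e he
    rw [mem_induce_edges, mem_J hdis] at he
    refine he.1.2.resolve_left ?_
    rintro ⟨x, hx⟩
    rw [Finset.mem_inter] at hx
    exact hi x (he.2 hx.1) hx.2
end J

section Iso
variable {H J : HGraph 3}

lemma iso_card (h : H.Iso J) : H.verts.card = J.verts.card ∧ H.edges.card = J.edges.card := by
  obtain ⟨f, hf, he⟩ := h
  have himg : H.verts.image f = J.verts := by
    apply Finset.coe_injective; rw [Finset.coe_image]; exact hf.image_eq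
  refine ⟨by rw [← himg, Finset.card_image_of_injOn hf.injOn], ?_⟩
  have : J.edges = H.edges.image (fun e => e.image f) := by
    ext e'
    rw [Finset.mem_image]
    constructor
    · intro h'
      have hsub := J.edges_sub e' h'
      rw [← himg] at hsub
      obtain ⟨e, hes, hee⟩ := Finset.subset_image_iff.1 hsub
      have hc : e.card = 3 := by
        rw [← J.edges_card e' h', ← hee, Finset.card_image_of_injOn (hf.injOn.mono hes)]
      exact ⟨e, (he e (Finset.mem_powersetCard.2 ⟨by exact_mod_cast hes, hc⟩)).2 (hee ▸ h'), hee⟩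
    · rintro ⟨e, h1, rfl⟩
      exact (he e (Finset.mem_powersetCard.2 ⟨H.edges_sub e h1, H.edges_card e h1⟩)).1 h1
  rw [this, Finset.card_image_of_injOn]
  intro e h1 e' h2 hee
  have a := H.edges_sub e h1
  have b := H.edges_sub e' h2
  ext x
  simp only at hee
  constructor
  · intro hx
    obtain ⟨y, hy, hxy⟩ := Finset.mem_image.1 (hee ▸ Finset.mem_image_of_mem f hx)
    exact hf.injOn (b hy) (a hx) hxy ▸ hy
  · intro hx
    obtain ⟨y, hy, hxy⟩ := Finset.mem_image.1 (hee.symm ▸ Finset.mem_image_of_mem f hx)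
    exact hf.injOn (a hy) (b hx) hxy ▸ hy

lemma iso_matching (h : H.Iso J) {k : ℕ} (hM : F32.HasMatching H k) : F32.HasMatching J k := by
  obtain ⟨f, hf, he⟩ := h
  obtain ⟨S, h1, h2, h3⟩ := hM
  refine ⟨fun i => (S i).image f, fun i => ⟨?_, ?_⟩, ?_, ?_⟩
  · intro x hx
    obtain ⟨y, hy, rfl⟩ := Finset.mem_image.1 hx
    exact hf.mapsTo ((h1 i).1 hy)
  · rw [Finset.card_image_of_injOn (hf.injOn.mono (h1 i).1), (h1 i).2]
  · intro i j hij
    rw [Finset.disjoint_left]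
    intro x hx hx'
    obtain ⟨y, hy, rfl⟩ := Finset.mem_image.1 hx
    obtain ⟨z, hz, hzy⟩ := Finset.mem_image.1 hx'
    have := hf.injOn ((h1 j).1 hz) ((h1 i).1 hy) hzy
    subst this
    exact Finset.disjoint_left.1 (h2 i j hij) hy hz
  · intro i
    obtain ⟨g, a, b, c⟩ := h3 i
    have hb : ∀ v ∈ F32.verts, g v ∈ H.verts ∧ g v ∈ S i := fun v hv => Finset.mem_inter.1 (b v hv)
    refine ⟨f ∘ g, ?_, ?_, ?_⟩
    · intro x hx y hy hxy
      exact a hx hy (hf.injOn (hb x hx).1 (hb y hy).1 hxy)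
    · intro v hv
      exact Finset.mem_inter.2 ⟨hf.mapsTo (hb v hv).1, Finset.mem_image_of_mem f (hb v hv).2⟩
    · intro e hee
      have hc := mem_induce_edges.1 (c e hee)
      rw [mem_induce_edges, ← Finset.image_image]
      refine ⟨?_, Finset.image_subset_image hc.2⟩
      exact (he _ (Finset.mem_powersetCard.2 ⟨H.edges_sub _ hc.1, H.edges_card _ hc.1⟩)).1 hc.1
end Iso

lemma struct_iso {H : HGraph 3} {m t : ℕ} (hH : H.verts.card = m + t) (h : Struct H m t) :
    ∃ G : HGraph 3, G.verts.card = m ∧ Disjoint G.verts (Finset.range t) ∧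
      Semibipartite 3 G ∧ G.edges.card = sN m ∧ H.Iso ((completeOn 3 (Finset.range t)).join G) := by
  classical
  obtain ⟨L, hL, hc, hall, hs, hsn⟩ := h
  set K := H.induce (H.verts \ L) with hK
  have hKv : K.verts = H.verts \ L := by
    rw [hK, induce_verts, Finset.inter_eq_right.2 Finset.sdiff_subset]
  have hKe : ∀ e, e ∈ K.edges ↔ e ∈ H.edges ∧ e ⊆ H.verts \ L := fun e => mem_induce_edges
  have hsh : Function.Injective (fun x : ℕ => x + t) := add_left_injective t
  let G : HGraph 3 := ofEdges 3 (K.verts.image (fun x => x + t)) (K.edges.image fun e => e.image fun x => x + t)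
  have hGv : G.verts = K.verts.image (fun x => x + t) := rfl
  have hGe : G.edges = K.edges.image fun e => e.image fun x => x + t := by
    refine Finset.filter_true_of_mem ?_
    intro e he
    obtain ⟨e', he', rfl⟩ := Finset.mem_image.1 he
    exact ⟨Finset.image_subset_image (K.edges_sub e' he'),
      by rw [Finset.card_image_of_injective _ hsh, K.edges_card e' he']⟩
  have hdis : Disjoint G.verts (Finset.range t) := by
    rw [Finset.disjoint_left, hGv]
    intro x hx hx'
    obtain ⟨y, -, rfl⟩ := Finset.mem_image.1 hx
    rw [Finset.mem_range] at hx'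
    omega
  refine ⟨G, ?_, hdis, ?_, ?_, ?_⟩
  · rw [hGv, Finset.card_image_of_injective _ hsh, hKv, Finset.card_sdiff_of_subset hL, hH, hc]
    omega
  · obtain ⟨V, hV, hVe⟩ := hs
    refine ⟨V.image (fun x => x + t), Finset.image_subset_image hV, fun e he => ?_⟩
    rw [hGe] at he
    obtain ⟨e', he', rfl⟩ := Finset.mem_image.1 he
    rw [← Finset.image_inter _ _ hsh, Finset.card_image_of_injective _ hsh]
    exact hVe e' he'
  · rw [hGe, Finset.card_image_of_injective _ (Finset.image_injective hsh), hsn]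
  · let φ := L.equivFinOfCardEq hc
    let f : ℕ → ℕ := fun x => if h : x ∈ L then (φ ⟨x, h⟩ : ℕ) else x + t
    have f1 : ∀ x (h : x ∈ L), f x = (φ ⟨x, h⟩ : ℕ) := fun x h => dif_pos h
    have f2 : ∀ x, x ∉ L → f x = x + t := fun x h => dif_neg h
    have f3 : ∀ x ∈ L, f x < t := fun x h => by rw [f1 x h]; exact (φ ⟨x, h⟩).2
    have finj : Function.Injective f := by
      intro x y hxy
      by_cases hx : x ∈ L <;> by_cases hy : y ∈ L
      · rw [f1 x hx, f1 y hy] at hxy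
        have := φ.injective (Fin.ext hxy)
        simpa using this
      · have := f3 x hx; rw [f2 y hy] at hxy; omega
      · have := f3 y hy; rw [f2 x hx] at hxy; omega
      · rw [f2 x hx, f2 y hy] at hxy; omega
    have fmap : ∀ x ∈ H.verts, f x ∈ Finset.range t ∪ G.verts := by
      intro x hx
      rw [Finset.mem_union]
      by_cases hxL : x ∈ L
      · exact Or.inl (Finset.mem_range.2 (f3 x hxL))
      · right
        rw [hGv, f2 x hxL, hKv]
        exact Finset.mem_image_of_mem _ (Finset.mem_sdiff.2 ⟨hx, hxL⟩)
    refine ⟨f, ⟨?_, finj.injOn, ?_⟩, ?_⟩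
    · intro x hx
      exact fmap x hx
    · intro y hy
      have hy : y ∈ Finset.range t ∪ G.verts := hy
      rcases Finset.mem_union.1 hy with h | h
      · refine ⟨φ.symm ⟨y, Finset.mem_range.1 h⟩, hL (φ.symm ⟨y, Finset.mem_range.1 h⟩).2, ?_⟩
        rw [f1 _ (φ.symm ⟨y, Finset.mem_range.1 h⟩).2]
        simp
      · rw [hGv, hKv] at h
        obtain ⟨x, hx, rfl⟩ := Finset.mem_image.1 h
        rw [Finset.mem_sdiff] at hx
        exact ⟨x, hx.1, f2 x hx.2⟩
    · intro e he
      rw [mem_J hdis]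
      have he' := Finset.mem_powersetCard.1 he
      have hbase : e.image f ⊆ Finset.range t ∪ G.verts ∧ (e.image f).card = 3 := by
        refine ⟨?_, by rw [Finset.card_image_of_injective _ finj, he'.2]⟩
        intro y hy
        obtain ⟨x, hx, rfl⟩ := Finset.mem_image.1 hy
        exact fmap x (he'.1 hx)
      by_cases hne : (e ∩ L).Nonempty
      · refine ⟨fun _ => ⟨hbase, Or.inl ?_⟩, fun _ => hall e he hne⟩
        obtain ⟨x, hx⟩ := hne
        rw [Finset.mem_inter] at hx
        exact ⟨f x, Finset.mem_inter.2 ⟨Finset.mem_image_of_mem f hx.1, Finset.mem_range.2 (f3 x hx.2)⟩⟩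
      · have hnL : ∀ x ∈ e, x ∉ L := fun x hx hxL => hne ⟨x, Finset.mem_inter.2 ⟨hx, hxL⟩⟩
        have himg : e.image f = e.image fun x => x + t :=
          Finset.image_congr fun x hx => f2 x (hnL x hx)
        have heK : e ∈ H.edges ↔ e ∈ K.edges := by
          rw [hKe]
          exact ⟨fun h => ⟨h, fun x hx => Finset.mem_sdiff.2 ⟨he'.1 hx, hnL x hx⟩⟩, fun h => h.1⟩
        rw [heK, himg, hGe]
        constructor
        · intro h
          exact ⟨by rw [← himg]; exact hbase, Or.inr (Finset.mem_image_of_mem _ h)⟩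
        · rintro ⟨-, ⟨y, hy⟩ | h⟩
          · rw [Finset.mem_inter, Finset.mem_image, Finset.mem_range] at hy
            obtain ⟨⟨x, -, rfl⟩, hlt⟩ := hy
            omega
          · obtain ⟨e'', h1, h2⟩ := Finset.mem_image.1 h
            exact Finset.image_injective hsh h2 ▸ h1

theorem final :
    ∃ N₀ : ℕ, ∃ c : ℝ, 0 < c ∧ ∀ n : ℕ, N₀ ≤ n → ∀ t : ℕ, (t : ℝ) ≤ c * n →
      ∀ H : HGraph 3, IsExtremalMatchingFree 3 n t F32 H ↔
        ∃ G : HGraph 3, G.verts.card = n - t ∧ Disjoint G.verts (Finset.range t) ∧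
          Semibipartite 3 G ∧
          (∀ G' : HGraph 3, G'.verts.card = n - t → Semibipartite 3 G' →
            G'.edges.card ≤ G.edges.card) ∧
          H.Iso ((completeOn 3 (Finset.range t)).join G) := by
  obtain ⟨N, hN5, hN⟩ := mainInd
  refine ⟨2 * N, 1/10^6, by norm_num, ?_⟩
  intro n hn t ht H
  have ht' : 10^6 * t ≤ n := by
    have : (10:ℝ)^6 * t ≤ n := by linarith
    exact_mod_cast this
  obtain ⟨m, hm⟩ : ∃ m, n = m + t := ⟨n - t, by omega⟩
  have hnt : n - t = m := by omega
  rw [hnt]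
  have hmain := hN t m (by omega) (by omega)
  have hJ : ∀ G : HGraph 3, G.verts.card = m → Disjoint G.verts (Finset.range t) → G.edges.card = sN m →
      ((completeOn 3 (Finset.range t)).join G).edges.card = gN m t := by
    intro G h1 h2 h3
    have a := J_card h2
    have b := gN_choose m t
    rw [h1, h3] at a
    omega
  have hex : exMatchN 3 n t F32 = gN m t := by
    refine IsGreatest.csSup_eq ⟨?_, ?_⟩
    · obtain ⟨G, h1, h2, h3, h4⟩ := semibip_exists m t
      exact ⟨_, by rw [J_vcard h2, h1, hm], J_noMatching h2 h3, hJ G h1 h2 h4⟩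
    · rintro k ⟨H', h1, h2, rfl⟩
      exact (hmain H' (by rw [h1, hm]) h2).1
  unfold IsExtremalMatchingFree
  rw [hex]
  constructor
  · rintro ⟨h1, h2, h3⟩
    have h1' : H.verts.card = m + t := by rw [h1, hm]
    obtain ⟨G, g1, g2, g3, g4, g5⟩ := struct_iso h1' ((hmain H h1' h2).2 h3)
    refine ⟨G, g1, g2, g3, fun G' h hs => ?_, g5⟩
    rw [g4, ← h]
    exact semibip_le hs
  · rintro ⟨G, g1, g2, g3, g4, g5⟩
    obtain ⟨G', h1, -, h3, h4⟩ := semibip_exists m t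
    have hG : G.edges.card = sN m := le_antisymm (g1 ▸ semibip_le g3) (h4 ▸ g4 G' h1 h3)
    obtain ⟨i1, i2⟩ := iso_card g5
    exact ⟨by rw [i1, J_vcard g2, g1, hm], fun hM => J_noMatching g2 g3 (iso_matching g5 hM),
      by rw [i2, hJ G g1 g2 hG]⟩

end PartH5

/-- the density Corrádi–Hajnal theorem for `𝔽_{3,2}`; `S_3(n−t)`
is characterized as a maximum semibipartite 3-graph on `n − t` vertices. -/
theorem statement_16 :
    ∃ N₀ : ℕ, ∃ c : ℝ, 0 < c ∧ ∀ n : ℕ, N₀ ≤ n → ∀ t : ℕ, (t : ℝ) ≤ c * n →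
      ∀ H : HGraph 3, IsExtremalMatchingFree 3 n t F32 H ↔
        ∃ G : HGraph 3, G.verts.card = n - t ∧ Disjoint G.verts (Finset.range t) ∧
          Semibipartite 3 G ∧
          (∀ G' : HGraph 3, G'.verts.card = n - t → Semibipartite 3 G' →
            G'.edges.card ≤ G.edges.card) ∧
          H.Iso ((completeOn 3 (Finset.range t)).join G) := final

end DensityCH
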